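/- arXiv:1908.05198 — 6 statements merged into one kernel-verified Lean document; each statement's English description precedes it below -/
import Mathlib

section
/- There exists an absolute constant c > 0 such that the following holds. Let k ≥ 3 be odd and let n, B_1, B_2 ∈ ℕ satisfy B_2 ≥ B_1 ≥ 1, B_2 ≥ k and n ≥ 2·B_2. Let h_1,...,h_k : {B_1+1,...,n} → {1,...,⌊B_2/k⌋} and s_1,...,s_k : {B_1+1,...,n} → {−1,1} be truly random (all values mutually independent, each h_ℓ(j) uniform on {1,...,⌊B_2/k⌋} and each s_ℓ(j) uniform on {−1,1}). For i ∈ {B_1+1,...,n} define f̃_i = median_{1≤ℓ≤k} s_ℓ(i)·Σ_{j=B_1+1}^n 1[h_ℓ(j)=h_ℓ(i)]·s_ℓ(j)·(1/j). Then for every i ∈ {B_1+1,...,n}, E[|f̃_i − 1/i|] ≥ c/B_2. -/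
/-- Expectation of a real-valued random variable on a finite probability space
with the uniform distribution. -/
noncomputable def expUnif {Ω : Type*} [Fintype Ω] (X : Ω → ℝ) : ℝ :=
  (∑ ω : Ω, X ω) / (Fintype.card Ω : ℝ)

/-- The sign `±1` encoded by a boolean. -/
def sgn (b : Bool) : ℝ := if b then 1 else -1

/-- The median of `k` real numbers (for odd `k` this is the usual median). -/
noncomputable def medianFin {k : ℕ} (v : Fin k → ℝ) : ℝ :=
  (List.insertionSort (· ≤ ·) (List.ofFn v)).getD (k / 2) 0

/-- Zipfian frequency of the light item indexed by `j : Fin (n - B₁)`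
(representing item `B₁ + j + 1`): `1/(B₁ + j + 1)`. -/
noncomputable def zipfTail (B₁ : ℕ) {m : ℕ} (j : Fin m) : ℝ :=
  ((B₁ : ℝ) + (j : ℝ) + 1)⁻¹

section helpers
open Finset

lemma le_medianFin {k : ℕ} (hk : 0 < k) (v : Fin k → ℝ) (x : ℝ)
    (h : k < 2 * #{l : Fin k | x ≤ v l}) : x ≤ medianFin v := by
  classical
  by_contra hlt
  push Not at hlt
  unfold medianFin at hlt
  set L := List.insertionSort (· ≤ ·) (List.ofFn v) with hL
  have hlen : L.length = k := by simp [hL]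
  have hsort : L.Pairwise (· ≤ ·) := List.pairwise_insertionSort _ _
  have hk2 : k / 2 < L.length := by rw [hlen]; omega
  rw [List.getD_eq_getElem _ _ hk2] at hlt
  have hcount : L.countP (fun y => decide (x ≤ y)) = #{l : Fin k | x ≤ v l} := by
    have hp : L.Perm (List.ofFn v) := List.perm_insertionSort _ _
    rw [hp.countP_eq, List.ofFn_eq_map, List.countP_map, List.countP_eq_length_filter]
    have := List.toFinset_card_of_nodup ((List.nodup_finRange k).filter ((fun y => decide (x ≤ y)) ∘ v))
    rw [← this]
    congr 1
    ext l
    simp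
  have hsplit : L.countP (fun y => decide (x ≤ y)) ≤ k - (k / 2 + 1) := by
    conv_lhs => rw [← List.take_append_drop (k / 2 + 1) L]
    rw [List.countP_append]
    have h1 : (L.take (k / 2 + 1)).countP (fun y => decide (x ≤ y)) = 0 := by
      rw [List.countP_eq_zero]
      intro a ha
      obtain ⟨j, hj, rfl⟩ := List.mem_iff_getElem.1 ha
      simp only [List.length_take, lt_inf_iff] at hj
      rw [List.getElem_take]
      have : L[j] ≤ L[k / 2] := by
        rcases Nat.lt_or_ge j (k / 2) with hj' | hj'
        · exact List.pairwise_iff_getElem.1 hsort _ _ _ _ hj'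
        · have : j = k / 2 := by omega
          subst this; exact le_rfl
      simp only [decide_eq_true_eq, not_le]
      linarith
    have h2 : (L.drop (k / 2 + 1)).countP (fun y => decide (x ≤ y)) ≤ k - (k / 2 + 1) := by
      refine List.countP_le_length.trans ?_
      rw [List.length_drop, hlen]
    omega
  omega

lemma choose_half_sq (m : ℕ) : ((m.choose (m / 2) : ℝ)) ^ 2 * (m + 1) ≤ 4 ^ m := by
  have key : ∀ u : ℕ, ((Nat.centralBinom u : ℝ)) ^ 2 * (2 * u + 1) ≤ 16 ^ u := by
    intro u
    induction u with
    | zero => simp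
    | succ u ih =>
      have h := Nat.succ_mul_centralBinom_succ u
      have h' : ((u : ℝ) + 1) * (Nat.centralBinom (u + 1) : ℝ)
          = 2 * (2 * u + 1) * (Nat.centralBinom u : ℝ) := by exact_mod_cast h
      set X := (Nat.centralBinom (u + 1) : ℝ)
      set Y := (Nat.centralBinom u : ℝ)
      have hu : (0 : ℝ) ≤ u := Nat.cast_nonneg u
      have hX : X = 2 * (2 * u + 1) * Y / (u + 1) := by
        field_simp; linarith
      rw [pow_succ 16 u, hX]
      push_cast
      have e : (2 * (2 * (u:ℝ) + 1) * Y / (u + 1)) ^ 2 * (2 * (u + 1) + 1)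
        = (Y ^ 2 * (2 * u + 1)) * (4 * (2 * u + 1) * (2 * u + 3) / (u + 1) ^ 2) := by
        field_simp; ring
      rw [e]
      apply mul_le_mul ih _ (by positivity) (by positivity)
      rw [div_le_iff₀ (by positivity)]
      nlinarith
  rcases Nat.even_or_odd' m with ⟨u, rfl | rfl⟩
  · have := key u
    rw [Nat.centralBinom] at this
    rw [Nat.mul_div_cancel_left _ two_pos, pow_mul]
    push_cast
    norm_num
    exact this
  · have := key (u + 1)
    have e : (2 * u + 1) / 2 = u := by omega
    rw [e]
    have hc : Nat.centralBinom (u + 1) = 2 * (2 * u + 1).choose u := by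
      rw [Nat.centralBinom, show 2 * (u + 1) = (2 * u + 1) + 1 by ring, Nat.choose_succ_succ,
        Nat.choose_symm_half]; ring
    rw [hc] at this
    push_cast at this ⊢
    rw [pow_succ 4, pow_mul]
    rw [pow_succ 16] at this
    norm_num
    nlinarith [sq_nonneg ((2 * u + 1).choose u : ℝ)]

lemma majority_count {R : Type*} [Fintype R] [DecidableEq R] (A : Finset R) (k : ℕ) (hk : Odd k)
    (ha : 0 < #A) (ha' : #A < Fintype.card R) :
    (1 / 4 : ℝ) * (4 * (#A : ℝ) * ((Fintype.card R : ℝ) - #A) / (Fintype.card R : ℝ) ^ 2) ^ k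
      * (Fintype.card R : ℝ) ^ k ≤ #{ω : Fin k → R | k < 2 * #{l | ω l ∈ A}} := by
  set r : ℝ := (Fintype.card R : ℝ) with hr
  set a : ℝ := (#A : ℝ) with haa
  have ha0 : 0 < a := by simpa [haa] using ha
  have har : a < r := by simpa [haa, hr] using ha'
  have hra : 0 < r - a := by linarith
  have hr0 : 0 < r := by linarith
  set Mj : Finset (Finset (Fin k)) := {S | k < 2 * #S} with hMj
  -- number of majority sets
  have hMc : 2 * #Mj = 2 ^ k := by
    have h1 : #Mj = #Mjᶜ := by
      refine Finset.card_bij' (fun S _ => Sᶜ) (fun S _ => Sᶜ) ?_ ?_ ?_ ?_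
      · intro S hS
        have := Finset.card_compl S
        have := Finset.card_le_univ S
        simp [hMj] at *
        omega
      · intro S hS
        have := Finset.card_compl S
        have := Finset.card_le_univ S
        obtain ⟨c, rfl⟩ := hk
        simp [hMj] at *
        omega
      · simp
      · simp
    have h2 := Finset.card_add_card_compl Mj
    rw [Fintype.card_finset, Fintype.card_fin] at h2
    omega
  have hMc' : (#Mj : ℝ) = 2 ^ k / 2 := by
    have : (2 : ℝ) * #Mj = 2 ^ k := by exact_mod_cast hMc
    linarith
  -- the fibres
  have hfib : (#{ω : Fin k → R | k < 2 * #{l | ω l ∈ A}} : ℝ)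
      = ∑ S ∈ Mj, a ^ #S * (r - a) ^ (k - #S) := by
    rw [Finset.card_eq_sum_card_fiberwise (f := fun ω : Fin k → R => ({l | ω l ∈ A} : Finset (Fin k)))
      (t := Mj) (by intro ω hω; simpa [hMj] using hω)]
    push_cast
    refine Finset.sum_congr rfl fun S hS => ?_
    have : ({ω ∈ ({ω : Fin k → R | k < 2 * #{l | ω l ∈ A}} : Finset _) |
        ({l | ω l ∈ A} : Finset (Fin k)) = S} : Finset (Fin k → R))
        = Fintype.piFinset (fun l => if l ∈ S then A else Aᶜ) := by
      ext ω
      simp only [Finset.mem_filter, Finset.mem_univ, true_and, Fintype.mem_piFinset]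
      constructor
      · rintro ⟨-, rfl⟩ l
        by_cases hl : ω l ∈ A <;> simp [hl]
      · intro h
        have e : ({l | ω l ∈ A} : Finset (Fin k)) = S := by
          ext l
          have := h l
          by_cases hl : l ∈ S <;> simp [hl] at this ⊢ <;> exact this
        refine ⟨?_, e⟩
        rw [e]
        simpa [hMj] using hS
    rw [this, Fintype.card_piFinset]
    push_cast
    have e2 : ∀ l : Fin k, ((#(if l ∈ S then A else Aᶜ) : ℕ) : ℝ) = if l ∈ S then a else r - a := by
      intro l
      split_ifs
      · rfl
      · rw [Finset.card_compl, Nat.cast_sub (Finset.card_le_univ A)]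
    simp_rw [e2]
    rw [Finset.prod_ite]
    simp only [Finset.prod_const]
    congr 2
    · simp
    · have : ({l | l ∉ S} : Finset (Fin k)) = Sᶜ := by ext; simp
      rw [this, Finset.card_compl, Fintype.card_fin]
  have hCS := Finset.sum_sq_le_sum_mul_sum_of_sq_le_mul Mj (r := fun _ => (1 : ℝ))
    (f := fun S => a ^ #S * (r - a) ^ (k - #S))
    (g := fun S => a⁻¹ ^ #S * (r - a)⁻¹ ^ (k - #S))
    (fun S _ => by positivity) (fun S _ => by positivity)
    (fun S _ => le_of_eq <| by
      rw [mul_mul_mul_comm, ← mul_pow, ← mul_pow, mul_inv_cancel₀ ha0.ne',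
        mul_inv_cancel₀ hra.ne']; simp)
  have hG : ∑ S ∈ Mj, a⁻¹ ^ #S * (r - a)⁻¹ ^ (k - #S) ≤ (r / (a * (r - a))) ^ k := by
    calc _ ≤ ∑ S : Finset (Fin k), a⁻¹ ^ #S * (r - a)⁻¹ ^ (k - #S) :=
          Finset.sum_le_sum_of_subset_of_nonneg (Finset.subset_univ _)
            (fun S _ _ => by positivity)
      _ = (a⁻¹ + (r - a)⁻¹) ^ k := by
          have := Fintype.sum_pow_mul_eq_add_pow (Fin k) a⁻¹ (r - a)⁻¹
          rw [Fintype.card_fin] at this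
          exact this
      _ = _ := by
          congr 1
          field_simp
          ring
  rw [← hfib] at hCS
  set P : ℝ := (#{ω : Fin k → R | k < 2 * #{l | ω l ∈ A}} : ℝ) with hP
  have hP0 : 0 ≤ P := Nat.cast_nonneg _
  have h3 : (2 ^ k / 2 : ℝ) ^ 2 ≤ P * (r / (a * (r - a))) ^ k := by
    calc (2 ^ k / 2 : ℝ) ^ 2 = (∑ S ∈ Mj, (1:ℝ)) ^ 2 := by simp [hMc']
      _ ≤ _ := hCS
      _ ≤ _ := by gcongr
  have h4 : (r / (a * (r - a))) ^ k * ((a * (r - a)) / r) ^ k = 1 := by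
    rw [← mul_pow]
    have : r / (a * (r - a)) * (a * (r - a) / r) = 1 := by field_simp
    rw [this, one_pow]
  calc _ = (2 ^ k / 2 : ℝ) ^ 2 * ((a * (r - a)) / r) ^ k := by
        have : (2 ^ k / 2 : ℝ) ^ 2 = 1 / 4 * 4 ^ k := by
          rw [div_pow, ← pow_mul, mul_comm k 2, pow_mul]; norm_num; ring
        rw [this, mul_assoc (1 / 4 : ℝ), mul_assoc (1 / 4 : ℝ), ← mul_pow, ← mul_pow]
        congr 2
        field_simp
    _ ≤ P * (r / (a * (r - a))) ^ k * ((a * (r - a)) / r) ^ k := by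
        apply mul_le_mul_of_nonneg_right h3; positivity
    _ = P := by rw [mul_assoc, h4, mul_one]

/-- exchangeability -/
lemma exchange {ι : Type*} [Fintype ι] [DecidableEq ι] (b : ℕ) (J : Finset ι) (i : ι) (hi : i ∈ J) :
    (#J : ℝ) * ∑ h : ι → Fin b, ((#{j ∈ J | h j = h i} : ℝ))⁻¹ ≤ b * (b : ℝ) ^ (Fintype.card ι) := by
  have h1 : ∀ i' ∈ J, ∑ h : ι → Fin b, ((#{j ∈ J | h j = h i} : ℝ))⁻¹
      = ∑ h : ι → Fin b, ((#{j ∈ J | h j = h i'} : ℝ))⁻¹ := by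
    intro i' hi'
    refine Fintype.sum_equiv ((Equiv.swap i i').arrowCongr (Equiv.refl _)) _ _ fun h => ?_
    congr 2
    refine Finset.card_bij' (fun j _ => Equiv.swap i i' j) (fun j _ => Equiv.swap i i' j) ?_ ?_ ?_ ?_
    · intro j hj
      simp only [Finset.mem_filter] at hj ⊢
      refine ⟨?_, ?_⟩
      · rcases eq_or_ne j i with rfl | h1
        · simpa using hi'
        · rcases eq_or_ne j i' with rfl | h2
          · simpa using hi
          · rw [Equiv.swap_apply_of_ne_of_ne h1 h2]; exact hj.1
      · simpa using hj.2
    · intro j hj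
      simp only [Finset.mem_filter] at hj ⊢
      refine ⟨?_, ?_⟩
      · rcases eq_or_ne j i with rfl | h1
        · simpa using hi'
        · rcases eq_or_ne j i' with rfl | h2
          · simpa using hi
          · rw [Equiv.swap_apply_of_ne_of_ne h1 h2]; exact hj.1
      · simpa using hj.2
    · simp
    · simp
  have h2 : (#J : ℝ) * ∑ h : ι → Fin b, ((#{j ∈ J | h j = h i} : ℝ))⁻¹
      = ∑ h : ι → Fin b, ∑ i' ∈ J, ((#{j ∈ J | h j = h i'} : ℝ))⁻¹ := by
    rw [Finset.sum_comm, ← Finset.sum_congr rfl h1, Finset.sum_const, nsmul_eq_mul]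
  rw [h2]
  calc _ ≤ ∑ h : ι → Fin b, (b : ℝ) := by
        refine Finset.sum_le_sum fun h _ => ?_
        rw [← Finset.sum_fiberwise J h]
        calc _ ≤ ∑ y : Fin b, (1 : ℝ) := by
              refine Finset.sum_le_sum fun y _ => ?_
              have : ∀ i' ∈ ({i' ∈ J | h i' = y} : Finset ι), ((#{j ∈ J | h j = h i'} : ℝ))⁻¹
                  = ((#{j ∈ J | h j = y} : ℝ))⁻¹ := by
                intro i' hi'
                rw [(Finset.mem_filter.1 hi').2]
              rw [Finset.sum_congr rfl this, Finset.sum_const, nsmul_eq_mul]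
              exact mul_inv_le_one
          _ = b := by simp
    _ = _ := by simp [mul_comm]

/-- Littlewood-Offord via Sperner -/
lemma littlewood_offord {ι : Type*} [Fintype ι] [DecidableEq ι] (T : Finset ι) (F : (ι → Bool) → ℝ) (t : ℝ)
    (hF : ∀ s s' : ι → Bool, (∀ j, j ∉ T → s j = s' j) → s ≠ s' → (∀ j, s j = true → s' j = true) →
      F s + 2 * t ≤ F s') :
    #{s : ι → Bool | |F s| < t} * 2 ^ #T ≤ 2 ^ Fintype.card ι * (#T).choose (#T / 2) := by
  set e := Equiv.piEquivPiSubtypeProd (fun j => j ∈ T) (fun _ : ι => Bool) with he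
  have hcard := Fintype.card_congr e
  simp only [Fintype.card_prod, Fintype.card_fun, Fintype.card_bool, Fintype.card_coe] at hcard
  rw [hcard]
  have hmain : #{s : ι → Bool | |F s| < t}
      ≤ Fintype.card ({x // x ∉ T} → Bool) * (#T).choose (#T / 2) := by
    rw [Finset.card_eq_sum_card_fiberwise (f := fun s => (e s).2) (t := Finset.univ)
      (by intro s _; simp)]
    calc _ ≤ ∑ y : ({x // x ∉ T} → Bool), (#T).choose (#T / 2) := by
          refine Finset.sum_le_sum fun y _ => ?_
          set Fb : Finset (ι → Bool) := {s ∈ ({s : ι → Bool | |F s| < t} : Finset _) | (e s).2 = y}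
            with hFb
          set φ : (ι → Bool) → Finset {x // x ∈ T} := fun s => {x | s x = true} with hφ
          have hoff : ∀ s ∈ Fb, ∀ s' ∈ Fb, ∀ j, j ∉ T → s j = s' j := by
            intro s hs s' hs' j hj
            have h1 := (Finset.mem_filter.1 hs).2
            have h2 := (Finset.mem_filter.1 hs').2
            have := congrFun (h1.trans h2.symm) ⟨j, hj⟩
            simpa [he, Equiv.piEquivPiSubtypeProd] using this
          have hinj : Set.InjOn φ Fb := by
            intro s hs s' hs' hss
            funext j
            by_cases hj : j ∈ T
            · have : (⟨j, hj⟩ : {x // x ∈ T}) ∈ φ s ↔ (⟨j, hj⟩ : {x // x ∈ T}) ∈ φ s' := by rw [hss]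
              simp only [hφ, Finset.mem_filter, Finset.mem_univ, true_and] at this
              exact Bool.eq_iff_iff.2 this
            · exact hoff s hs s' hs' j hj
          have hanti : IsAntichain (· ⊆ ·) (↑(Fb.image φ) : Set (Finset {x // x ∈ T})) := by
            intro U hU V hV hUV hsub
            simp only [Finset.coe_image, Set.mem_image, Finset.mem_coe] at hU hV
            obtain ⟨s, hs, rfl⟩ := hU
            obtain ⟨s', hs', rfl⟩ := hV
            have := hF s s' (hoff s hs s' hs') (fun h => hUV (by rw [h])) (by
              intro j hj
              by_cases hjT : j ∈ T
              · have : (⟨j, hjT⟩ : {x // x ∈ T}) ∈ φ s' := hsub (by simp [hφ, hj])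
                simpa [hφ] using this
              · rw [← hoff s hs s' hs' j hjT]; exact hj)
            have h1 := (Finset.mem_filter.1 (Finset.mem_filter.1 hs).1).2
            have h2 := (Finset.mem_filter.1 (Finset.mem_filter.1 hs').1).2
            rw [abs_lt] at h1 h2
            linarith [h1.1, h2.2]
          have := hanti.sperner
          rw [Finset.card_image_of_injOn hinj, Fintype.card_coe] at this
          exact this
      _ = _ := by simp
  have e3 : Fintype.card ({x // x ∉ T} → Bool) = 2 ^ Fintype.card {x // x ∉ T} := by
    simp only [Fintype.card_fun, Fintype.card_bool]
  rw [e3] at hmain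
  calc _ ≤ _ := Nat.mul_le_mul_right _ hmain
    _ = _ := by ring

/-- The noise of one row (without the outer sign). -/
noncomputable def rowG {ι : Type*} [Fintype ι] [DecidableEq ι] {b : ℕ} (z : ι → ℝ) (i : ι)
    (h : ι → Fin b) (s : ι → Bool) : ℝ :=
  ∑ j, if j ≠ i ∧ h j = h i then sgn (s j) * z j else 0

lemma rowG_small {ι : Type*} [Fintype ι] [DecidableEq ι] {b : ℕ} (z : ι → ℝ) (i : ι)
    (t : ℝ) (ht : 0 < t) (J : Finset ι) (hi : i ∈ J) (hJ : ∀ j ∈ J, j ≠ i → t ≤ z j)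
    (h : ι → Fin b) :
    (#{s : ι → Bool | |rowG z i h s| < t} : ℝ) ^ 2
      ≤ 4 ^ Fintype.card ι * (#{j ∈ J | h j = h i} : ℝ)⁻¹ := by
  set T : Finset ι := {j ∈ J | j ≠ i ∧ h j = h i} with hT
  have hTc : #{j ∈ J | h j = h i} = #T + 1 := by
    have : ({j ∈ J | h j = h i} : Finset ι) = insert i T := by
      ext j
      by_cases hj : j = i
      · subst hj; simp [hi]
      · simp [hT, hj]
    rw [this, Finset.card_insert_of_notMem (by simp [hT])]
  have hLO := littlewood_offord T (rowG z i h) t (by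
    intro s s' hoff hne hmono
    obtain ⟨j0, hj0⟩ : ∃ j, s j ≠ s' j := by
      by_contra hcon; push Not at hcon; exact hne (funext hcon)
    have hj0T : j0 ∈ T := by
      by_contra hcon; exact hj0 (hoff j0 hcon)
    have hdiff : rowG z i h s' - rowG z i h s
        = ∑ j, if j ≠ i ∧ h j = h i then (sgn (s' j) - sgn (s j)) * z j else 0 := by
      unfold rowG
      rw [← Finset.sum_sub_distrib]
      refine Finset.sum_congr rfl fun j _ => ?_
      split_ifs <;> ring
    have hterm : ∀ j, 0 ≤ (if j ≠ i ∧ h j = h i then (sgn (s' j) - sgn (s j)) * z j else 0) := by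
      intro j
      split_ifs with hc
      · by_cases hjT : j ∈ T
        · have hz : t ≤ z j := hJ j (Finset.mem_filter.1 hjT).1 hc.1
          have : 0 ≤ sgn (s' j) - sgn (s j) := by
            have := hmono j
            cases h1 : s j <;> cases h2 : s' j <;> simp_all [sgn]
          exact mul_nonneg this (by linarith)
        · rw [hoff j hjT]; simp
      · exact le_rfl
    have hs := Finset.single_le_sum (fun j _ => hterm j) (Finset.mem_univ j0)
    rw [← hdiff] at hs
    have hc := (Finset.mem_filter.1 hj0T).2
    rw [if_pos hc] at hs
    have hz : t ≤ z j0 := hJ j0 (Finset.mem_filter.1 hj0T).1 hc.1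
    have h2 : sgn (s' j0) - sgn (s j0) = 2 := by
      have := hmono j0
      cases h1 : s j0 <;> cases h2 : s' j0 <;> simp_all [sgn] <;> norm_num
    rw [h2] at hs
    linarith)
  have hch := choose_half_sq (#T)
  set C : ℝ := ((#T).choose (#T / 2) : ℝ) with hC
  have hLO' : (#{s : ι → Bool | |rowG z i h s| < t} : ℝ) * 2 ^ #T ≤ 2 ^ Fintype.card ι * C := by
    rw [hC]
    exact_mod_cast hLO
  set Z : ℝ := (#{s : ι → Bool | |rowG z i h s| < t} : ℝ) with hZ
  have hZ0 : 0 ≤ Z := Nat.cast_nonneg _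
  rw [hTc]
  push_cast
  rw [← div_eq_mul_inv, le_div_iff₀ (by positivity)]
  have h5 : (Z * 2 ^ #T) ^ 2 ≤ (2 ^ Fintype.card ι * C) ^ 2 :=
    pow_le_pow_left₀ (by positivity) hLO' 2
  have e4 : ∀ q : ℕ, ((2 : ℝ) ^ q) ^ 2 = 4 ^ q := by
    intro q; rw [← pow_mul, mul_comm, pow_mul]; norm_num
  rw [mul_pow, mul_pow, e4, e4] at h5
  have h4 : (0 : ℝ) < 4 ^ #T := by positivity
  refine le_of_mul_le_mul_right ?_ h4
  calc Z ^ 2 * ((#T : ℝ) + 1) * 4 ^ #T = (Z ^ 2 * 4 ^ #T) * ((#T : ℝ) + 1) := by ring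
    _ ≤ (4 ^ Fintype.card ι * C ^ 2) * ((#T : ℝ) + 1) := by gcongr
    _ = 4 ^ Fintype.card ι * (C ^ 2 * ((#T : ℝ) + 1)) := by ring
    _ ≤ _ := by gcongr

lemma row_small {ι : Type*} [Fintype ι] [DecidableEq ι] {b k : ℕ} (hb : 0 < b)
    (z : ι → ℝ) (i : ι)
    (t : ℝ) (ht : 0 < t) (J : Finset ι) (hi : i ∈ J) (hJ : ∀ j ∈ J, j ≠ i → t ≤ z j)
    (hk : b * k ≤ #J) :
    (#{r : (ι → Fin b) × (ι → Bool) | |rowG z i r.1 r.2| < t} : ℝ) ^ 2 * k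
      ≤ (Fintype.card ((ι → Fin b) × (ι → Bool)) : ℝ) ^ 2 := by
  set m := Fintype.card ι with hm
  have hz : (#{r : (ι → Fin b) × (ι → Bool) | |rowG z i r.1 r.2| < t} : ℝ)
      = ∑ h : ι → Fin b, (#{s : ι → Bool | |rowG z i h s| < t} : ℝ) := by
    simp only [Finset.card_filter]
    push_cast
    rw [Fintype.sum_prod_type]
  rw [hz]
  set Z : ℝ := ∑ h : ι → Fin b, (#{s : ι → Bool | |rowG z i h s| < t} : ℝ) with hZ
  have h1 : Z ^ 2 ≤ (b : ℝ) ^ m * ∑ h : ι → Fin b, (#{s : ι → Bool | |rowG z i h s| < t} : ℝ) ^ 2 := by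
    have := sq_sum_le_card_mul_sum_sq (s := (Finset.univ : Finset (ι → Fin b)))
      (f := fun h => (#{s : ι → Bool | |rowG z i h s| < t} : ℝ))
    simpa using this
  have h2 : ∑ h : ι → Fin b, (#{s : ι → Bool | |rowG z i h s| < t} : ℝ) ^ 2
      ≤ 4 ^ m * ∑ h : ι → Fin b, (#{j ∈ J | h j = h i} : ℝ)⁻¹ := by
    rw [Finset.mul_sum]
    exact Finset.sum_le_sum fun h _ => rowG_small z i t ht J hi hJ h
  have h3 := exchange b J i hi
  set E : ℝ := ∑ h : ι → Fin b, (#{j ∈ J | h j = h i} : ℝ)⁻¹ with hE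
  have hE0 : 0 ≤ E := Finset.sum_nonneg fun h _ => by positivity
  clear_value E Z
  have hb' : (0 : ℝ) < b := by exact_mod_cast hb
  have hk' : (b : ℝ) * k ≤ #J := by exact_mod_cast hk
  have hEk : E * k ≤ (b : ℝ) ^ m := by
    refine le_of_mul_le_mul_left ?_ hb'
    calc (b : ℝ) * (E * k) = (b * k) * E := by ring
      _ ≤ #J * E := mul_le_mul_of_nonneg_right hk' hE0
      _ ≤ _ := h3
  have hc : (Fintype.card ((ι → Fin b) × (ι → Bool)) : ℝ) = (b : ℝ) ^ m * 2 ^ m := by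
    rw [Fintype.card_prod, Fintype.card_fun, Fintype.card_fun, Fintype.card_fin, Fintype.card_bool]
    push_cast
    rfl
  rw [hc]
  calc Z ^ 2 * k ≤ (b : ℝ) ^ m * (4 ^ m * E) * k := by
        gcongr
        exact h1.trans (by gcongr)
    _ = (b : ℝ) ^ m * 4 ^ m * (E * k) := by ring
    _ ≤ (b : ℝ) ^ m * 4 ^ m * (b : ℝ) ^ m := by gcongr
    _ = _ := by
        rw [show (4 : ℝ) = 2 * 2 by norm_num, mul_pow]; ring

lemma sgn_not (b : Bool) : sgn (!b) = - sgn b := by cases b <;> simp [sgn]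
lemma sgn_sq (b : Bool) : sgn b * sgn b = 1 := by cases b <;> simp [sgn]
lemma abs_sgn (b : Bool) : |sgn b| = 1 := by cases b <;> simp [sgn]

lemma row_sym {ι : Type*} [Fintype ι] [DecidableEq ι] {b : ℕ}
    (z : ι → ℝ) (i : ι) (t : ℝ) (ht : 0 < t) :
    2 * (#{r : (ι → Fin b) × (ι → Bool) | t ≤ sgn (r.2 i) * rowG z i r.1 r.2} : ℝ)
      + #{r : (ι → Fin b) × (ι → Bool) | |rowG z i r.1 r.2| < t}
      = (Fintype.card ((ι → Fin b) × (ι → Bool)) : ℝ) := by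
  have hflip : #{r : (ι → Fin b) × (ι → Bool) | t ≤ sgn (r.2 i) * rowG z i r.1 r.2}
      = #{r : (ι → Fin b) × (ι → Bool) | sgn (r.2 i) * rowG z i r.1 r.2 ≤ -t} := by
    have hG : ∀ r : (ι → Fin b) × (ι → Bool),
        rowG z i r.1 (Function.update r.2 i (!r.2 i)) = rowG z i r.1 r.2 := by
      intro r
      unfold rowG
      refine Finset.sum_congr rfl fun j _ => ?_
      split_ifs with hc
      · rw [Function.update_of_ne hc.1]
      · rfl
    refine Finset.card_bij' (fun r _ => (r.1, Function.update r.2 i (!r.2 i)))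
      (fun r _ => (r.1, Function.update r.2 i (!r.2 i))) ?_ ?_ ?_ ?_
    · intro r hr
      simp only [Finset.mem_filter, Finset.mem_univ, true_and] at hr ⊢
      rw [hG, Function.update_self, sgn_not]; linarith
    · intro r hr
      simp only [Finset.mem_filter, Finset.mem_univ, true_and] at hr ⊢
      rw [hG, Function.update_self, sgn_not]; linarith
    · intro r _; simp
    · intro r _; simp
  have hc : (Fintype.card ((ι → Fin b) × (ι → Bool)) : ℝ)
      = ∑ r : (ι → Fin b) × (ι → Bool), (1 : ℝ) := by simp
  rw [two_mul]
  nth_rewrite 2 [hflip]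
  rw [hc]
  simp only [Finset.card_filter]
  push_cast
  rw [← Finset.sum_add_distrib, ← Finset.sum_add_distrib]
  refine Finset.sum_congr rfl fun r _ => ?_
  have habs : |rowG z i r.1 r.2| = |sgn (r.2 i) * rowG z i r.1 r.2| := by
    rw [abs_mul, abs_sgn, one_mul]
  simp only [habs, abs_lt]
  set W := sgn (r.2 i) * rowG z i r.1 r.2
  split_ifs with h1 h2 h3 h3 h2 h3 h3
  all_goals first
    | (norm_num; done)
    | (exfalso; linarith)
    | (exfalso; linarith [h3.1, h3.2])
    | (exfalso; apply h3; constructor <;> linarith)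

lemma row_eq {ι : Type*} [Fintype ι] [DecidableEq ι] {b : ℕ} (z : ι → ℝ) (i : ι)
    (h : ι → Fin b) (s : ι → Bool) :
    sgn (s i) * ∑ j, (if h j = h i then sgn (s j) * z j else 0)
      = z i + sgn (s i) * rowG z i h s := by
  have : ∑ j, (if h j = h i then sgn (s j) * z j else 0) = sgn (s i) * z i + rowG z i h s := by
    unfold rowG
    rw [← Finset.add_sum_erase _ _ (Finset.mem_univ i),
      ← Finset.add_sum_erase (Finset.univ) (fun j => if j ≠ i ∧ h j = h i then _ else _)
        (Finset.mem_univ i)]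
    simp only [if_true, ne_eq, not_true_eq_false, false_and, if_false, zero_add]
    congr 1
    refine Finset.sum_congr rfl fun j hj => ?_
    simp [Finset.ne_of_mem_erase hj]
  rw [this, mul_add, ← mul_assoc, sgn_sq, one_mul]

lemma one_sub_inv_pow (k : ℕ) (hk : 3 ≤ k) : Real.exp (-2) ≤ (1 - 1 / (k : ℝ)) ^ k := by
  have hk' : (3 : ℝ) ≤ k := by exact_mod_cast hk
  have hx : (0 : ℝ) < 1 - 1 / (k : ℝ) := by
    rw [sub_pos, div_lt_one (by linarith)]; linarith
  have h := Real.one_sub_inv_le_log_of_pos hx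
  rw [← Real.exp_log hx, ← Real.exp_nat_mul]
  apply Real.exp_le_exp.2
  have h2 : (k : ℝ) * (1 - (1 - 1 / (k : ℝ))⁻¹) = - (k / (k - 1)) := by
    have : (k : ℝ) - 1 ≠ 0 := by linarith
    have : (k : ℝ) ≠ 0 := by linarith
    field_simp
    ring
  have h3 : (k : ℝ) / (k - 1) ≤ 2 := by
    rw [div_le_iff₀ (by linarith)]; linarith
  have h4 : (k : ℝ) * (1 - (1 - 1 / (k : ℝ))⁻¹) ≤ k * Real.log (1 - 1 / (k : ℝ)) := by gcongr
  linarith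

lemma core {ι : Type*} [Fintype ι] [DecidableEq ι] {b k : ℕ} (hb : 0 < b) (hodd : Odd k)
    (hk3 : 3 ≤ k) (z : ι → ℝ) (i : ι)
    (t : ℝ) (ht : 0 < t) (J : Finset ι) (hi : i ∈ J) (hJ : ∀ j ∈ J, j ≠ i → t ≤ z j)
    (hk : b * k ≤ #J) :
    t * (Real.exp (-2) / 4) ≤ expUnif (fun ω : (Fin k → ι → Fin b) × (Fin k → ι → Bool) =>
      |medianFin (fun l : Fin k => sgn (ω.2 l i) * ∑ j,
        if ω.1 l j = ω.1 l i then sgn (ω.2 l j) * z j else 0) - z i|) := by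
  classical
  have hsym := row_sym (b := b) z i t ht
  have hsm := row_small hb z i t ht J hi hJ hk
  set A : Finset ((ι → Fin b) × (ι → Bool)) :=
    {r : (ι → Fin b) × (ι → Bool) | t ≤ sgn (r.2 i) * rowG z i r.1 r.2} with hA
  set q : ℝ := (#{r : (ι → Fin b) × (ι → Bool) | |rowG z i r.1 r.2| < t} : ℝ) with hq
  have hq0 : 0 ≤ q := Nat.cast_nonneg _
  have : Nonempty (Fin b) := ⟨⟨0, hb⟩⟩
  have hr0 : (0 : ℝ) < Fintype.card ((ι → Fin b) × (ι → Bool)) := by exact_mod_cast Fintype.card_pos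
  set r : ℝ := (Fintype.card ((ι → Fin b) × (ι → Bool)) : ℝ) with hr
  set a : ℝ := (#A : ℝ) with ha
  have hk' : (3 : ℝ) ≤ k := by exact_mod_cast hk3
  have hqr : q < r := by
    by_contra hcon
    push Not at hcon
    have : r ^ 2 ≤ q ^ 2 := pow_le_pow_left₀ hr0.le hcon 2
    nlinarith [pow_pos hr0 2]
  have ha0 : 0 < a := by linarith
  have har : a < r := by linarith
  have hmaj := majority_count A k hodd (by rw [ha] at ha0; exact_mod_cast ha0)
    (by rw [ha, hr] at har; exact_mod_cast har)
  rw [← hr, ← ha] at hmaj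
  have hratio : 1 - 1 / (k : ℝ) ≤ 4 * a * (r - a) / r ^ 2 := by
    rw [le_div_iff₀ (by positivity)]
    have e : 4 * a * (r - a) = r ^ 2 - q ^ 2 := by
      have : q = r - 2 * a := by linarith
      rw [this]; ring
    rw [e]
    have : q ^ 2 ≤ 1 / (k : ℝ) * r ^ 2 := by
      rw [one_div, inv_mul_eq_div, le_div_iff₀ (by linarith)]; exact hsm
    linarith
  have hpos : (0 : ℝ) ≤ 1 - 1 / (k : ℝ) := by
    rw [sub_nonneg, div_le_one (by linarith)]; linarith
  have hexp : Real.exp (-2) ≤ (4 * a * (r - a) / r ^ 2) ^ k :=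
    (one_sub_inv_pow k hk3).trans (pow_le_pow_left₀ hpos hratio k)
  set Mj : Finset (Fin k → ((ι → Fin b) × (ι → Bool))) := {ω : Fin k → ((ι → Fin b) × (ι → Bool)) | k < 2 * #{l | ω l ∈ A}} with hMj
  have hMjc : Real.exp (-2) / 4 * r ^ k ≤ #Mj := by
    refine le_trans ?_ hmaj
    apply mul_le_mul_of_nonneg_right _ (by positivity)
    linarith
  set f : (Fin k → ((ι → Fin b) × (ι → Bool))) → ℝ := fun ω => |medianFin (fun l : Fin k => sgn ((ω l).2 i) * ∑ j,
        if (ω l).1 j = (ω l).1 i then sgn ((ω l).2 j) * z j else 0) - z i| with hf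
  have hfM : ∀ ω ∈ Mj, t ≤ f ω := by
    intro ω hω
    have h1 : z i + t ≤ medianFin (fun l : Fin k => sgn ((ω l).2 i) * ∑ j,
        if (ω l).1 j = (ω l).1 i then sgn ((ω l).2 j) * z j else 0) := by
      apply le_medianFin (by omega)
      have h2 : k < 2 * #{l | ω l ∈ A} := (Finset.mem_filter.1 hω).2
      refine lt_of_lt_of_le h2 (Nat.mul_le_mul_left _ (Finset.card_le_card ?_))
      intro l hl
      simp only [Finset.mem_filter, Finset.mem_univ, true_and, hA] at hl ⊢
      rw [row_eq]
      linarith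
    exact le_trans (by linarith) (le_abs_self _)
  unfold expUnif
  have hsum : ∑ ω : (Fin k → ι → Fin b) × (Fin k → ι → Bool),
      |medianFin (fun l : Fin k => sgn (ω.2 l i) * ∑ j,
        if ω.1 l j = ω.1 l i then sgn (ω.2 l j) * z j else 0) - z i| = ∑ ω, f ω :=
    Fintype.sum_equiv (Equiv.arrowProdEquivProdArrow (Fin k) (fun _ => ι → Fin b)
      (fun _ => ι → Bool)).symm _ f (fun ω => rfl)
  rw [hsum, Fintype.card_congr (Equiv.arrowProdEquivProdArrow (Fin k) (fun _ => ι → Fin b)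
    (fun _ => ι → Bool)).symm]
  have hcard : (Fintype.card (Fin k → ((ι → Fin b) × (ι → Bool))) : ℝ) = r ^ k := by
    rw [Fintype.card_fun, Fintype.card_fin]; push_cast; rfl
  rw [hcard, le_div_iff₀ (by positivity)]
  calc t * (Real.exp (-2) / 4) * r ^ k = t * (Real.exp (-2) / 4 * r ^ k) := by ring
    _ ≤ t * #Mj := by gcongr
    _ = ∑ ω ∈ Mj, t := by rw [Finset.sum_const, nsmul_eq_mul]; ring
    _ ≤ ∑ ω ∈ Mj, f ω := Finset.sum_le_sum hfM
    _ ≤ ∑ ω, f ω := Finset.sum_le_sum_of_subset_of_nonneg (Finset.subset_univ _)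
        (fun ω _ _ => abs_nonneg _)

end helpers

/-- learned Count-Sketch with `k ≥ 3` rows (each of `⌊B₂/k⌋` buckets)
on the items `{B₁+1,...,n}` has expected error `Ω(1/B₂)` on each item. -/
theorem learned_countSketch_multi_row_lower :
    ∃ c : ℝ, 0 < c ∧
      ∀ k n B₁ B₂ : ℕ, Odd k → 3 ≤ k → 1 ≤ B₁ → B₁ ≤ B₂ → k ≤ B₂ → 2 * B₂ ≤ n →
        ∀ i : Fin (n - B₁),
          c / (B₂ : ℝ) ≤
            expUnif (fun ω : (Fin k → Fin (n - B₁) → Fin (B₂ / k)) ×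
                (Fin k → Fin (n - B₁) → Bool) =>
              |medianFin (fun ℓ : Fin k =>
                  sgn (ω.2 ℓ i) * ∑ j : Fin (n - B₁),
                    if ω.1 ℓ j = ω.1 ℓ i then sgn (ω.2 ℓ j) * zipfTail B₁ j else 0) -
                zipfTail B₁ i|) := by
  refine ⟨Real.exp (-2) / 8, by positivity, ?_⟩
  intro k n B₁ B₂ hodd hk3 hB1 hB12 hkB hn i
  have hk0 : 0 < k := by omega
  have hb : 0 < B₂ / k := Nat.div_pos hkB hk0
  have hB2 : (0 : ℝ) < B₂ := by
    have : 0 < B₂ := by omega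
    exact_mod_cast this
  set J0 : Finset (Fin (n - B₁)) := Finset.univ.filter (fun j => (j : ℕ) < B₂) with hJ0
  have hsub : ∀ j ∈ J0, 1 / (2 * (B₂ : ℝ)) ≤ zipfTail B₁ j := by
    intro j hj
    have hj' : (j : ℕ) < B₂ := (Finset.mem_filter.1 hj).2
    unfold zipfTail
    rw [← one_div]
    apply one_div_le_one_div_of_le (by positivity)
    have h1 : (j : ℝ) + 1 ≤ B₂ := by exact_mod_cast hj'
    have h2 : (B₁ : ℝ) ≤ B₂ := by exact_mod_cast hB12
    linarith
  have hJ0c : B₂ ≤ J0.card := by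
    have : (Finset.univ : Finset (Fin B₂)).card ≤ J0.card := by
      refine Finset.card_le_card_of_injOn
        (fun x => (⟨x, by have := x.2; omega⟩ : Fin (n - B₁))) ?_ ?_
      · intro x _; simp [hJ0]
      · intro x _ y _ hxy
        simpa [Fin.ext_iff] using hxy
    simpa using this
  have := core (b := B₂ / k) (k := k) hb hodd hk3 (fun j => zipfTail B₁ j) i (1 / (2 * (B₂ : ℝ)))
    (by positivity) (insert i J0) (Finset.mem_insert_self _ _)
    (fun j hj hji => hsub j ((Finset.mem_insert.1 hj).resolve_left hji))
    ((Nat.div_mul_le_self B₂ k).trans (hJ0c.trans (Finset.card_le_card (Finset.subset_insert _ _))))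
  refine le_trans (le_of_eq ?_) this
  field_simp
  norm_num
end

section
/- For every fixed α > 1 there exists a constant C > 0 (depending only on α) such that the following holds. For all n, B, k ∈ ℕ with k ≥ 2, B ≥ 2 and k·B ≤ n, for truly random independent hash functions h_1,...,h_k : {1,...,n} → {1,...,B}, and for every i ∈ {1,...,n}, the Count-Min estimate f̃_i of the frequency f_i = 1/i^α satisfies E[f̃_i − f_i] ≤ C^k·(log B)^{k/α + 1}·(B^{−k} + B^{−α}). -/
/-- Generalized Zipfian frequency with exponent `α` of the item indexed by
`i : Fin n` (representing item `i+1`): `1/(i+1)^α`. -/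
noncomputable def zipfGen (α : ℝ) {n : ℕ} (i : Fin n) : ℝ :=
  ((i : ℝ) + 1) ^ (-α)

/-- The Count-Min estimate of item `i` given the `k` hash functions `h`. -/
noncomputable def cmEst {n B k : ℕ} (f : Fin n → ℝ) (h : Fin k → Fin n → Fin B)
    (i : Fin n) : ℝ :=
  ⨅ ℓ : Fin k, ∑ j : Fin n, if h ℓ j = h ℓ i then f j else 0


lemma step_tele (α : ℝ) (hα : 1 < α) (x : ℝ) (hx : 0 < x) :
    (α - 1) * (x + 1) ^ (-α) ≤ x ^ (1 - α) - (x + 1) ^ (1 - α) := by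
  have hx1 : 0 < x + 1 := by linarith
  have h1 : (x + 1) ^ (1 - α) = (x + 1) ^ (-α) * (x + 1) := by
    rw [show (1 - α) = -α + 1 by ring, Real.rpow_add hx1, Real.rpow_one]
  have h2 : x ^ (1 - α) = (x + 1) ^ (1 - α) * (x / (x + 1)) ^ (1 - α) := by
    rw [← Real.mul_rpow hx1.le (by positivity)]
    congr 1
    field_simp
  have h3 : 1 + (α - 1) / (x + 1) ≤ (x / (x + 1)) ^ (1 - α) := by
    have hp : 0 < x / (x + 1) := by positivity
    rw [Real.rpow_def_of_pos hp]
    have h4 := Real.add_one_le_exp (Real.log (x / (x + 1)) * (1 - α))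
    have h5 := Real.log_le_sub_one_of_pos hp
    have h6 : x / (x + 1) - 1 = - (1 / (x + 1)) := by field_simp; ring
    rw [h6] at h5
    have h7 : (α - 1) / (x + 1) = (α - 1) * (1 / (x + 1)) := by ring
    rw [h7]
    nlinarith
  have hpos : 0 < (x + 1) ^ (1 - α) := Real.rpow_pos_of_pos hx1 _
  have h8 := mul_le_mul_of_nonneg_left h3 hpos.le
  rw [← h2] at h8
  have h9 : (x + 1) ^ (1 - α) * (1 + (α - 1) / (x + 1))
      = (x + 1) ^ (1 - α) + (α - 1) * (x + 1) ^ (-α) := by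
    rw [h1]; field_simp
  linarith

lemma tail_sum (α : ℝ) (hα : 1 < α) (a : ℝ) (ha : 0 < a) (m : ℕ) :
    ∑ j ∈ Finset.range m, (a + j + 1) ^ (-α)
      ≤ (a ^ (1 - α) - (a + m) ^ (1 - α)) / (α - 1) := by
  have h0 : 0 < α - 1 := by linarith
  induction m with
  | zero => simp
  | succ m ih =>
    rw [Finset.sum_range_succ]
    have h := step_tele α hα (a + m) (by positivity)
    rw [le_div_iff₀ h0] at ih ⊢
    push_cast
    rw [← add_assoc]
    nlinarith

lemma tail_sum' (α : ℝ) (hα : 1 < α) (a : ℝ) (ha : 0 < a) (m : ℕ) :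
    ∑ j ∈ Finset.range m, (a + j + 1) ^ (-α) ≤ a ^ (1 - α) / (α - 1) := by
  have h0 : 0 < α - 1 := by linarith
  refine (tail_sum α hα a ha m).trans ?_
  have : 0 ≤ (a + m) ^ (1 - α) := by positivity
  gcongr
  linarith

lemma total_sum (α : ℝ) (hα : 1 < α) (n : ℕ) :
    ∑ j : Fin n, zipfGen α j ≤ 2 + 1 / (α - 1) := by
  have h0 : 0 < α - 1 := by linarith
  unfold zipfGen
  rw [Fin.sum_univ_eq_sum_range (fun j : ℕ => ((j : ℝ) + 1) ^ (-α))]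
  cases n with
  | zero => simp; positivity
  | succ n =>
    rw [Finset.sum_range_succ']
    have h := tail_sum' α hα 1 one_pos n
    simp only [Real.one_rpow] at h
    have h2 : ∑ k ∈ Finset.range n, (((k + 1 : ℕ) : ℝ) + 1) ^ (-α)
      = ∑ j ∈ Finset.range n, ((1 : ℝ) + j + 1) ^ (-α) := by
      refine Finset.sum_congr rfl fun j _ => ?_
      push_cast
      ring_nf
    rw [h2]
    simp
    simp at h
    linarith

lemma min_sum (α : ℝ) (hα : 1 < α) (S : ℝ) (t : ℝ) (ht : 0 < t) (htS : t ≤ S) (n : ℕ) :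
    ∑ j : Fin n, min 1 (zipfGen α j / t) ≤
      (1 + S ^ (1 / α) + 1 / (α - 1)) * t ^ (-(1 / α)) := by
  have h0 : 0 < α - 1 := by linarith
  have hα0 : 0 < α := by linarith
  unfold zipfGen
  rw [Fin.sum_univ_eq_sum_range (fun j : ℕ => min 1 (((j : ℝ) + 1) ^ (-α) / t))]
  set m : ℝ := t ^ (-(1 / α)) with hm
  have hmpos : 0 < m := Real.rpow_pos_of_pos ht _
  have hmt : m ^ α = 1 / t := by
    rw [hm, ← Real.rpow_mul ht.le, show -(1 / α) * α = -1 by field_simp, Real.rpow_neg_one, one_div]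
  set a : ℕ := ⌊m⌋₊ + 1 with ha
  have ham : m ≤ a := by rw [ha]; push_cast; exact (Nat.lt_floor_add_one m).le
  have ham' : (a : ℝ) ≤ m + 1 := by
    rw [ha]; push_cast; have := Nat.floor_le hmpos.le; linarith
  have hapos : (0 : ℝ) < a := by linarith
  calc ∑ j ∈ Finset.range n, min 1 (((j : ℝ) + 1) ^ (-α) / t)
      ≤ ∑ j ∈ Finset.range (a + n), min 1 (((j : ℝ) + 1) ^ (-α) / t) := by
        apply Finset.sum_le_sum_of_subset_of_nonneg
        · intro x hx; simp at hx ⊢; omega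
        · intro j _ _; positivity
    _ = ∑ j ∈ Finset.range a, min 1 (((j : ℝ) + 1) ^ (-α) / t)
        + ∑ j ∈ Finset.range n, min 1 ((((a + j : ℕ) : ℝ) + 1) ^ (-α) / t) := by
        rw [Finset.sum_range_add]
    _ ≤ ∑ j ∈ Finset.range a, (1 : ℝ)
        + ∑ j ∈ Finset.range n, ((a : ℝ) + j + 1) ^ (-α) / t := by
        gcongr with j _ j _
        · exact min_le_left _ _
        · refine (min_le_right _ _).trans (le_of_eq ?_)
          push_cast; rfl
    _ ≤ a + a ^ (1 - α) / (α - 1) / t := by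
        rw [← Finset.sum_div]
        simp only [Finset.sum_const, Finset.card_range, nsmul_eq_mul, mul_one]
        gcongr
        exact tail_sum' α hα a hapos n
    _ ≤ (m + 1) + m ^ (1 - α) / (α - 1) / t := by
        have : (a : ℝ) ^ (1 - α) ≤ m ^ (1 - α) :=
          Real.rpow_le_rpow_of_nonpos hmpos ham (by linarith)
        gcongr
    _ = (m + 1) + m / (α - 1) := by
        congr 1
        have : m ^ (1 - α) * (1 / t) = m := by
          rw [← hmt, ← Real.rpow_add hmpos]; simp
        calc m ^ (1 - α) / (α - 1) / t = (m ^ (1 - α) * (1 / t)) / (α - 1) := by ring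
          _ = _ := by rw [this]
    _ ≤ _ := by
        have h1 : 1 ≤ S ^ (1 / α) * m := by
          calc (1 : ℝ) = t ^ (1 / α) * m := by
                rw [hm, ← Real.rpow_add ht]; simp
            _ ≤ _ := by gcongr
        have h2 : m / (α - 1) = 1 / (α - 1) * m := by ring
        rw [h2]
        linarith

lemma coll_card {n B : ℕ} (i j : Fin n) (hij : j ≠ i) :
    ((Finset.univ.filter fun g : Fin n → Fin B => g j = g i).card : ℝ) * B
      ≤ (Fintype.card (Fin n → Fin B) : ℝ) := by
  have : (Finset.univ.filter fun g : Fin n → Fin B => g j = g i).card * B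
      ≤ Fintype.card (Fin n → Fin B) := by
    have h1 : (Finset.univ.filter fun g : Fin n → Fin B => g j = g i).card * B
      = ((Finset.univ.filter fun g : Fin n → Fin B => g j = g i) ×ˢ
          (Finset.univ : Finset (Fin B))).card := by simp
    rw [h1, ← Finset.card_univ]
    apply Finset.card_le_card_of_injOn (fun p => Function.update p.1 j p.2)
    · intro x _; simp
    · rintro ⟨g, b⟩ hg ⟨g', b'⟩ hg' h
      simp at hg hg'
      simp only at h
      have hb : b = b' := by
        have := congrFun h j
        simpa using this
      have hoff : ∀ x, x ≠ j → g x = g' x := by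
        intro x hx
        have := congrFun h x
        simpa [hx] using this
      have : g = g' := by
        funext x
        by_cases hx : x = j
        · subst hx
          rw [hg, hg', hoff i (Ne.symm hij)]
        · exact hoff x hx
      rw [this, hb]
  exact_mod_cast this

/-- error of one row -/
noncomputable def rowErr {n B : ℕ} (α : ℝ) (i : Fin n) (g : Fin n → Fin B) : ℝ :=
  ∑ j ∈ Finset.univ.erase i, if g j = g i then zipfGen α j else 0

lemma zipf_nonneg (α : ℝ) {n : ℕ} (j : Fin n) : 0 ≤ zipfGen α j := by
  unfold zipfGen; positivity

open Classical in
lemma row_tail {n B : ℕ} (α : ℝ) (hα : 1 < α) (hB : 0 < B) (i : Fin n) (S t : ℝ)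
    (ht : 0 < t) (htS : t ≤ S) :
    ((Finset.univ.filter fun g : Fin n → Fin B => t ≤ rowErr α i g).card : ℝ) ≤
      (1 + S ^ (1 / α) + 1 / (α - 1)) * t ^ (-(1 / α)) / B * Fintype.card (Fin n → Fin B) := by
  have hB' : (0 : ℝ) < B := by exact_mod_cast hB
  have key : ∀ g : Fin n → Fin B, (if t ≤ rowErr α i g then (1 : ℝ) else 0) ≤
      ∑ j ∈ Finset.univ.erase i, if g j = g i then min 1 (zipfGen α j / t) else 0 := by
    intro g
    have hnn : ∀ j ∈ Finset.univ.erase i,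
        0 ≤ if g j = g i then min 1 (zipfGen α j / t) else 0 := by
      intro j _
      have := zipf_nonneg α j
      split_ifs <;> positivity
    split_ifs with h
    · by_cases hbig : ∃ j ∈ Finset.univ.erase i, g j = g i ∧ t ≤ zipfGen α j
      · obtain ⟨j, hj, hg, hz⟩ := hbig
        refine le_trans ?_ (Finset.single_le_sum hnn hj)
        rw [if_pos hg, min_eq_left]
        rwa [one_le_div ht]
      · push Not at hbig
        have : ∑ j ∈ Finset.univ.erase i, (if g j = g i then min 1 (zipfGen α j / t) else 0)
            = rowErr α i g / t := by
          unfold rowErr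
          rw [Finset.sum_div]
          refine Finset.sum_congr rfl fun j hj => ?_
          split_ifs with hg
          · rw [min_eq_right]
            rw [div_le_one ht]
            exact (hbig j hj hg).le
          · simp
        rw [this]
        rwa [one_le_div ht]
    · exact Finset.sum_nonneg hnn
  calc ((Finset.univ.filter fun g : Fin n → Fin B => t ≤ rowErr α i g).card : ℝ)
      = ∑ g : Fin n → Fin B, (if t ≤ rowErr α i g then (1 : ℝ) else 0) := by
        rw [Finset.sum_boole]
    _ ≤ ∑ g : Fin n → Fin B, ∑ j ∈ Finset.univ.erase i,
          (if g j = g i then min 1 (zipfGen α j / t) else 0) :=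
        Finset.sum_le_sum fun g _ => key g
    _ = ∑ j ∈ Finset.univ.erase i, ∑ g : Fin n → Fin B,
          (if g j = g i then min 1 (zipfGen α j / t) else 0) := Finset.sum_comm
    _ ≤ ∑ j ∈ Finset.univ.erase i,
          min 1 (zipfGen α j / t) * (Fintype.card (Fin n → Fin B) / B) := by
        refine Finset.sum_le_sum fun j hj => ?_
        rw [← Finset.sum_filter, Finset.sum_const, nsmul_eq_mul, mul_comm]
        have hz := zipf_nonneg α j
        have := coll_card (B := B) i j (Finset.ne_of_mem_erase hj)
        gcongr
        rw [le_div_iff₀ hB']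
        convert this
    _ ≤ ∑ j : Fin n, min 1 (zipfGen α j / t) * (Fintype.card (Fin n → Fin B) / B) := by
        apply Finset.sum_le_sum_of_subset_of_nonneg (Finset.erase_subset _ _)
        intro j _ _
        have hz := zipf_nonneg α j
        positivity
    _ ≤ _ := by
        rw [← Finset.sum_mul]
        have := min_sum α hα S t ht htS n
        calc _ ≤ (1 + S ^ (1 / α) + 1 / (α - 1)) * t ^ (-(1 / α)) *
              (Fintype.card (Fin n → Fin B) / B) := by gcongr
          _ = _ := by ring

open Classical in
lemma layer (Y S : ℝ) (hS : 0 ≤ S) (hY : Y ≤ S) (R : ℕ) :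
    Y ≤ S / 2 ^ R + ∑ r ∈ Finset.range R, S / 2 ^ r * (if S / 2 ^ (r + 1) ≤ Y then 1 else 0) := by
  induction R with
  | zero => simpa using hY
  | succ R ih =>
    rw [Finset.sum_range_succ]
    have h1 : 0 ≤ ∑ r ∈ Finset.range R, S / 2 ^ r * (if S / 2 ^ (r + 1) ≤ Y then (1 : ℝ) else 0) := by
      apply Finset.sum_nonneg; intro r _; split_ifs <;> positivity
    have h2 : 0 ≤ S / 2 ^ (R + 1) := by positivity
    split_ifs with h
    · linarith
    · linarith

lemma err_le {n B k : ℕ} (α : ℝ) (i : Fin n) (h : Fin k → Fin n → Fin B) (l : Fin k) :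
    cmEst (zipfGen α) h i - zipfGen α i ≤ rowErr α i (h l) := by
  have h1 : cmEst (zipfGen α) h i ≤ ∑ j : Fin n, if h l j = h l i then zipfGen α j else 0 := by
    unfold cmEst
    exact ciInf_le (Set.finite_range _).bddBelow l
  have h2 : (∑ j : Fin n, if h l j = h l i then zipfGen α j else 0)
      = zipfGen α i + rowErr α i (h l) := by
    unfold rowErr
    rw [← Finset.add_sum_erase _ _ (Finset.mem_univ i)]
    simp
  linarith

lemma rowErr_le {n B : ℕ} (α : ℝ) (hα : 1 < α) (i : Fin n) (g : Fin n → Fin B) :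
    rowErr α i g ≤ 2 + 1 / (α - 1) := by
  refine le_trans ?_ (total_sum α hα n)
  unfold rowErr
  calc _ ≤ ∑ j ∈ Finset.univ.erase i, zipfGen α j := by
        refine Finset.sum_le_sum fun j _ => ?_
        have := zipf_nonneg α j
        split_ifs <;> simp [this]
    _ ≤ _ := Finset.sum_le_sum_of_subset_of_nonneg (Finset.erase_subset _ _)
        fun j _ _ => zipf_nonneg α j

open Classical in
lemma all_tail {n B k : ℕ} (α : ℝ) (hα : 1 < α) (hB : 0 < B) (i : Fin n) (S t : ℝ)
    (ht : 0 < t) (htS : t ≤ S) :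
    (∑ h : Fin k → Fin n → Fin B,
      if t ≤ cmEst (zipfGen α) h i - zipfGen α i then (1 : ℝ) else 0) ≤
      ((1 + S ^ (1 / α) + 1 / (α - 1)) * t ^ (-(1 / α)) / B) ^ k *
        Fintype.card (Fin k → Fin n → Fin B) := by
  have hsub : (Finset.univ.filter fun h : Fin k → Fin n → Fin B =>
        t ≤ cmEst (zipfGen α) h i - zipfGen α i) ⊆
      Fintype.piFinset (fun _ : Fin k =>
        Finset.univ.filter fun g : Fin n → Fin B => t ≤ rowErr α i g) := by
    intro h hh
    simp only [Finset.mem_filter, Finset.mem_univ, true_and, Fintype.mem_piFinset] at hh ⊢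
    intro l
    exact hh.trans (err_le α i h l)
  have hc := Finset.card_le_card hsub
  rw [Fintype.card_piFinset_const] at hc
  rw [Finset.sum_boole]
  have hc' : ((Finset.univ.filter fun h : Fin k → Fin n → Fin B =>
        t ≤ cmEst (zipfGen α) h i - zipfGen α i).card : ℝ) ≤
      ((Finset.univ.filter fun g : Fin n → Fin B => t ≤ rowErr α i g).card : ℝ) ^ k := by
    exact_mod_cast hc
  refine hc'.trans ?_
  have := pow_le_pow_left₀ (Nat.cast_nonneg _) (row_tail α hα hB i S t ht htS) k
  refine this.trans (le_of_eq ?_)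
  rw [mul_pow]
  congr 1
  rw [Fintype.card_fun (α := Fin k)]
  simp

lemma term_bound (α : ℝ) (hα : 1 < α) (S t B : ℝ) (k : ℕ) (hS : 1 ≤ S) (hB : 1 ≤ B)
    (ht : B ^ (-α) ≤ t) (htS : t ≤ S) :
    B ^ (-(k : ℝ)) * t ^ (1 - (k : ℝ) / α) ≤ S * (B ^ (-(k : ℝ)) + B ^ (-α)) := by
  have hB0 : 0 < B := by linarith
  have hα0 : 0 < α := by linarith
  have ht0 : 0 < t := lt_of_lt_of_le (Real.rpow_pos_of_pos hB0 _) ht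
  have hb1 : 0 < B ^ (-(k : ℝ)) := Real.rpow_pos_of_pos hB0 _
  have hb2 : 0 < B ^ (-α) := Real.rpow_pos_of_pos hB0 _
  have hkα : 0 ≤ (k : ℝ) / α := by positivity
  by_cases h : (k : ℝ) / α ≤ 1
  · have : t ^ (1 - (k : ℝ) / α) ≤ S := by
      calc t ^ (1 - (k : ℝ) / α) ≤ S ^ (1 - (k : ℝ) / α) :=
            Real.rpow_le_rpow ht0.le htS (by linarith)
        _ ≤ S ^ (1 : ℝ) := Real.rpow_le_rpow_of_exponent_le hS (by linarith)
        _ = S := Real.rpow_one S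
    have hS0 : 0 ≤ S * B ^ (-α) := by positivity
    nlinarith
  · push Not at h
    have h1 : t ^ (1 - (k : ℝ) / α) ≤ (B ^ (-α)) ^ (1 - (k : ℝ) / α) :=
      Real.rpow_le_rpow_of_nonpos hb2 ht (by linarith)
    have h2 : B ^ (-(k : ℝ)) * (B ^ (-α)) ^ (1 - (k : ℝ) / α) = B ^ (-α) := by
      rw [← Real.rpow_mul hB0.le, ← Real.rpow_add hB0]
      congr 1
      field_simp
      ring
    have h3 : B ^ (-(k : ℝ)) * t ^ (1 - (k : ℝ) / α) ≤ B ^ (-α) := by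
      rw [← h2]; gcongr
    nlinarith

lemma main_bound {n B k : ℕ} (α : ℝ) (hα : 1 < α) (hk : 2 ≤ k) (hB : 2 ≤ B) (i : Fin n)
    (S D : ℝ) (hSdef : S = 2 + 1 / (α - 1)) (hD : D = 1 + S ^ (1 / α) + 1 / (α - 1)) (R : ℕ)
    (hR1 : (B : ℝ) ^ α ≤ 2 ^ R) (hR2 : (2 : ℝ) ^ R ≤ 2 * (B : ℝ) ^ α) :
    expUnif (fun h : Fin k → Fin n → Fin B => cmEst (zipfGen α) h i - zipfGen α i) ≤
      (S + R * (2 * D ^ k * S)) * ((B : ℝ) ^ (-(k : ℝ)) + (B : ℝ) ^ (-α)) := by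
  classical
  have h0 : 0 < α - 1 := by linarith
  have hα0 : 0 < α := by linarith
  have hS2 : 2 ≤ S := by rw [hSdef]; have : 0 < 1 / (α - 1) := by positivity
                         linarith
  have hS0 : 0 < S := by linarith
  have hD0 : 0 < D := by rw [hD]; positivity
  have hB1 : (1 : ℝ) ≤ B := by exact_mod_cast (by omega : 1 ≤ B)
  have hB0 : (0 : ℝ) < B := by linarith
  have hBα : 0 < (B : ℝ) ^ α := Real.rpow_pos_of_pos hB0 _
  have hneg : (B : ℝ) ^ (-α) = 1 / (B : ℝ) ^ α := by rw [Real.rpow_neg hB0.le, one_div]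
  set W := (B : ℝ) ^ (-(k : ℝ)) + (B : ℝ) ^ (-α) with hW
  have hb1 : 0 < (B : ℝ) ^ (-(k : ℝ)) := Real.rpow_pos_of_pos hB0 _
  set N : ℝ := (Fintype.card (Fin k → Fin n → Fin B) : ℝ) with hN
  have hNpos : 0 < N := by
    have : Nonempty (Fin B) := ⟨⟨0, by omega⟩⟩
    rw [hN]; exact_mod_cast Fintype.card_pos
  unfold expUnif
  rw [div_le_iff₀ hNpos]
  have hlay : ∀ h : Fin k → Fin n → Fin B, cmEst (zipfGen α) h i - zipfGen α i ≤ S := by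
    intro h
    rw [hSdef]
    exact (err_le α i h ⟨0, by omega⟩).trans (rowErr_le α hα i _)
  calc ∑ h : Fin k → Fin n → Fin B, (cmEst (zipfGen α) h i - zipfGen α i)
      ≤ ∑ h : Fin k → Fin n → Fin B, (S / 2 ^ R + ∑ r ∈ Finset.range R, S / 2 ^ r *
          (if S / 2 ^ (r + 1) ≤ cmEst (zipfGen α) h i - zipfGen α i then (1 : ℝ) else 0)) :=
        Finset.sum_le_sum fun h _ => layer _ S hS0.le (hlay h) R
    _ = N * (S / 2 ^ R) + ∑ r ∈ Finset.range R, S / 2 ^ r * ∑ h : Fin k → Fin n → Fin B,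
          (if S / 2 ^ (r + 1) ≤ cmEst (zipfGen α) h i - zipfGen α i then (1 : ℝ) else 0) := by
        rw [Finset.sum_add_distrib, Finset.sum_comm]
        simp only [Finset.sum_const, nsmul_eq_mul, Finset.card_univ, Finset.mul_sum, hN]
    _ ≤ N * (S * W) + ∑ r ∈ Finset.range R, (2 * D ^ k * S) * W * N := by
        refine add_le_add (mul_le_mul_of_nonneg_left ?_ hNpos.le)
          (Finset.sum_le_sum fun r hr => ?_)
        · calc S / 2 ^ R ≤ S / (B : ℝ) ^ α := by gcongr
            _ = S * (B : ℝ) ^ (-α) := by rw [hneg]; ring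
            _ ≤ S * W := by rw [hW]; gcongr; linarith
        · have hr' : r + 1 ≤ R := by simpa using hr
          set t := S / 2 ^ (r + 1) with ht
          have ht0 : 0 < t := by positivity
          have htS : t ≤ S := div_le_self hS0.le (one_le_pow₀ (by norm_num))
          have htB : (B : ℝ) ^ (-α) ≤ t := by
            calc (B : ℝ) ^ (-α) = 2 / (2 * (B : ℝ) ^ α) := by rw [hneg]; field_simp
              _ ≤ S / 2 ^ R := by gcongr
              _ ≤ t := by
                rw [ht]; gcongr; norm_num
          have hall := all_tail (n := n) (B := B) (k := k) α hα (by omega) i S t ht0 htS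
          rw [← hD] at hall
          have hterm := term_bound α hα S t B k (by linarith) hB1 htB htS
          have h2t : S / 2 ^ r = 2 * t := by rw [ht, pow_succ]; field_simp
          have hid : t * (D * t ^ (-(1 / α)) / B) ^ k
              = D ^ k * ((B : ℝ) ^ (-(k : ℝ)) * t ^ (1 - (k : ℝ) / α)) := by
            have e1 : t ^ (1 - (k : ℝ) / α) = t * (t ^ (-(1 / α))) ^ k := by
              rw [← Real.rpow_natCast, ← Real.rpow_mul ht0.le, show 1 - (k : ℝ) / α
                = 1 + -(1 / α) * k by ring, Real.rpow_add ht0, Real.rpow_one]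
            have e2 : (B : ℝ) ^ (-(k : ℝ)) = ((B : ℝ) ^ k)⁻¹ := by
              rw [Real.rpow_neg hB0.le, Real.rpow_natCast]
            rw [e1, e2, div_pow, mul_pow]
            ring
          rw [h2t]
          calc _ ≤ 2 * t * ((D * t ^ (-(1 / α)) / B) ^ k * N) := by gcongr
            _ = 2 * (t * (D * t ^ (-(1 / α)) / B) ^ k) * N := by ring
            _ = 2 * (D ^ k * ((B : ℝ) ^ (-(k : ℝ)) * t ^ (1 - (k : ℝ) / α))) * N := by rw [hid]
            _ ≤ 2 * (D ^ k * (S * W)) * N := by gcongr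
            _ = _ := by ring
    _ = _ := by
        simp only [Finset.sum_const, Finset.card_range, nsmul_eq_mul]
        ring

theorem countMin_genZipf_large_alpha_upper :
    ∀ α : ℝ, 1 < α →
      ∃ C : ℝ, 0 < C ∧
        ∀ n B k : ℕ, 2 ≤ k → 2 ≤ B → k * B ≤ n → ∀ i : Fin n,
          expUnif (fun h : Fin k → Fin n → Fin B =>
              cmEst (zipfGen α) h i - zipfGen α i) ≤
            C ^ k * Real.log (B : ℝ) ^ ((k : ℝ) / α + 1) *
              ((B : ℝ) ^ (-(k : ℝ)) + (B : ℝ) ^ (-α)) := by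
  intro α hα
  have h0 : 0 < α - 1 := by linarith
  have hα0 : 0 < α := by linarith
  obtain ⟨S, hS⟩ : ∃ S, S = 2 + 1 / (α - 1) := ⟨_, rfl⟩
  obtain ⟨D, hD⟩ : ∃ D, D = 1 + S ^ (1 / α) + 1 / (α - 1) := ⟨_, rfl⟩
  obtain ⟨q, hq⟩ : ∃ q, q = Real.log 2 := ⟨_, rfl⟩
  have hq0 : 0 < q := by rw [hq]; exact Real.log_pos (by norm_num)
  have hq1 : q ≤ 1 := by rw [hq]; linarith [Real.log_two_lt_d9]
  obtain ⟨E, hE⟩ : ∃ E, E = (α + 1) / q := ⟨_, rfl⟩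
  have hi : 0 < 1 / (α - 1) := by positivity
  have hS2 : 2 ≤ S := by linarith
  have hD1 : 1 ≤ D := by
    have : 0 ≤ S ^ (1 / α) := by positivity
    linarith
  have hE1 : 1 ≤ E := by rw [hE, one_le_div hq0]; linarith
  refine ⟨3 * S * E * D / q, by positivity, ?_⟩
  intro n B k hk hB _ i
  have hB2 : (2 : ℝ) ≤ B := by exact_mod_cast hB
  have hB0 : (0 : ℝ) < B := by linarith
  set L := Real.log (B : ℝ) with hL
  have hLq : q ≤ L := by rw [hq, hL]; exact Real.log_le_log (by norm_num) hB2
  have hL0 : 0 < L := by linarith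
  have hBexp : (B : ℝ) ^ α = (2 : ℝ) ^ (α * L / q) := by
    rw [Real.rpow_def_of_pos hB0, Real.rpow_def_of_pos (by norm_num : (0 : ℝ) < 2), ← hq, ← hL]
    congr 1
    field_simp
  set R := ⌈α * L / q⌉₊ with hR
  have hRle : α * L / q ≤ R := Nat.le_ceil _
  have hRlt : (R : ℝ) < α * L / q + 1 := Nat.ceil_lt_add_one (by positivity)
  have hR1 : (B : ℝ) ^ α ≤ 2 ^ R := by
    rw [hBexp, ← Real.rpow_natCast]
    exact Real.rpow_le_rpow_of_exponent_le (by norm_num) hRle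
  have hR2 : (2 : ℝ) ^ R ≤ 2 * (B : ℝ) ^ α := by
    rw [hBexp, ← Real.rpow_natCast]
    calc (2 : ℝ) ^ (R : ℝ) ≤ 2 ^ (α * L / q + 1) :=
          Real.rpow_le_rpow_of_exponent_le (by norm_num) hRlt.le
      _ = _ := by rw [Real.rpow_add (by norm_num), Real.rpow_one, mul_comm]
  refine (main_bound α hα hk hB i S D hS hD R hR1 hR2).trans ?_
  have hLq1 : 1 ≤ L / q := by rwa [one_le_div hq0]
  have hRE : (R : ℝ) ≤ E * L := by
    have : E * L = α * L / q + L / q := by rw [hE]; ring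
    linarith
  have hEL : 1 ≤ E * L := by
    have : E * L = α * L / q + L / q := by rw [hE]; ring
    have : 0 ≤ α * L / q := by positivity
    linarith
  have hDk : 1 ≤ D ^ k := one_le_pow₀ hD1
  have hk0 : k ≠ 0 := by omega
  have hpow : q ^ k ≤ L ^ ((k : ℝ) / α) := by
    calc q ^ k = q ^ (k : ℝ) := (Real.rpow_natCast _ _).symm
      _ ≤ q ^ ((k : ℝ) / α) :=
          Real.rpow_le_rpow_of_exponent_ge hq0 hq1 (div_le_self (by positivity) hα.le)
      _ ≤ _ := Real.rpow_le_rpow hq0.le hLq (by positivity)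
  gcongr
  rw [Real.rpow_add hL0, Real.rpow_one]
  calc S + R * (2 * D ^ k * S) ≤ (E * L) * D ^ k * S + (E * L) * (2 * D ^ k * S) := by
        have : 1 ≤ E * L * D ^ k := one_le_mul_of_one_le_of_one_le hEL hDk
        gcongr
        nlinarith
    _ = (3 * S * E) * D ^ k * L := by ring
    _ ≤ (3 * S * E) ^ k * D ^ k * L := by
        have : 1 ≤ 3 * S * E := by nlinarith
        gcongr
        exact le_self_pow₀ this hk0
    _ = (3 * S * E * D / q) ^ k * (q ^ k * L) := by
        rw [div_pow, mul_pow (3 * S * E)]; field_simp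
    _ ≤ _ := by gcongr
end

section
/- For every fixed α > 1 there exists a constant c > 0 (depending only on α) such that the following holds. For all n, B, k ∈ ℕ with k ≥ 2, B ≥ 2 and k·B ≤ n, for truly random independent hash functions h_1,...,h_k : {1,...,n} → {1,...,B}, and for every i ∈ {1,...,n}, the Count-Min estimate f̃_i of the frequency f_i = 1/i^α satisfies E[f̃_i − f_i] ≥ c·(B^{−k} + (B·log k)^{−α}). -/
open Finset in
lemma noColl_card {n B : ℕ} (hB : 2 ≤ B) (i : Fin n) (S : Finset (Fin n)) (hi : i ∉ S) :
    ((univ.filter (fun g : Fin n → Fin B => ∀ j ∈ S, g j ≠ g i)).card : ℝ) ≤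
      (B : ℝ) ^ n * (1 - 1 / (B : ℝ)) ^ S.card := by
  classical
  have hB0 : (0 : ℝ) < B := by positivity
  let P : Fin B → Fin n → Finset (Fin B) := fun b j =>
    if j = i then {b} else if j ∈ S then univ.erase b else univ
  have hsub : (univ.filter (fun g : Fin n → Fin B => ∀ j ∈ S, g j ≠ g i)) ⊆
      univ.biUnion (fun b => Fintype.piFinset (P b)) := by
    intro g hg
    simp only [mem_filter, mem_univ, true_and] at hg
    simp only [mem_biUnion, mem_univ, true_and, Fintype.mem_piFinset]
    refine ⟨g i, fun j => ?_⟩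
    by_cases h1 : j = i
    · simp [P, h1]
    · by_cases h2 : j ∈ S
      · simp [P, h1, h2, hg j h2]
      · simp [P, h1, h2]
  have hcard : ∀ b, ((Fintype.piFinset (P b)).card : ℝ) =
      (B : ℝ) ^ n * (1 / B) * (1 - 1 / (B : ℝ)) ^ S.card := by
    intro b
    rw [Fintype.card_piFinset]
    push_cast
    have : ∀ j, ((P b j).card : ℝ) =
        (B : ℝ) * (if j = i then 1 / (B : ℝ) else 1) * (if j ∈ S then 1 - 1 / (B : ℝ) else 1) := by
      intro j
      by_cases h1 : j = i
      · subst h1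
        simp [P, hi, hB0.ne']
      · by_cases h2 : j ∈ S
        · simp only [P, h1, h2, if_true, if_false]
          rw [card_erase_of_mem (mem_univ _), card_univ, Fintype.card_fin,
            Nat.cast_sub (by omega)]
          field_simp
          simp
        · simp [P, h1, h2]
    simp_rw [this]
    rw [prod_mul_distrib, prod_mul_distrib, prod_ite_eq' univ i]
    simp
  calc _ ≤ ((univ.biUnion (fun b => Fintype.piFinset (P b))).card : ℝ) := by
        exact_mod_cast card_le_card hsub
    _ ≤ ∑ b : Fin B, ((Fintype.piFinset (P b)).card : ℝ) := by
        exact_mod_cast card_biUnion_le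
    _ = _ := by
        simp_rw [hcard]
        simp
        field_simp

open Finset in
lemma main_lb {α : ℝ} (hα : 0 < α) {n B k m : ℕ} (hk : 1 ≤ k) (hB : 2 ≤ B) (hm : 1 ≤ m)
    (hmn : m ≤ n) (i : Fin n) :
    (m : ℝ) ^ (-α) * (1 - (1 - 1 / (B : ℝ)) ^ (m - 1)) ^ k ≤
      expUnif (fun h : Fin k → Fin n → Fin B => cmEst (zipfGen α) h i - zipfGen α i) := by
  classical
  have hB0 : (0 : ℝ) < B := by positivity
  have hB1 : 1 / (B : ℝ) ≤ 1 := by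
    rw [div_le_one hB0]; exact_mod_cast (by omega : 1 ≤ B)
  have hB2 : 0 ≤ 1 / (B : ℝ) := by positivity
  have hm0 : (0 : ℝ) < m := by exact_mod_cast hm
  let T : Finset (Fin n) := univ.filter (fun j => (j : ℕ) < m)
  let S := T.erase i
  have hT : T.card = m := by
    have : T.map Fin.valEmbedding = range m := by
      ext x
      simp only [T, mem_map, mem_filter, mem_univ, true_and, Fin.valEmbedding_apply, mem_range]
      constructor
      · rintro ⟨a, h, rfl⟩; exact h
      · intro h; exact ⟨⟨x, by omega⟩, h, rfl⟩
    rw [← card_map Fin.valEmbedding, this, card_range]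
  have hS : m - 1 ≤ S.card := by
    have := pred_card_le_card_erase (s := T) (a := i)
    rwa [hT] at this
  let G := univ.filter (fun g : Fin n → Fin B => ∃ j ∈ S, g j = g i)
  have hG : (B : ℝ) ^ n * (1 - (1 - 1 / (B : ℝ)) ^ (m - 1)) ≤ G.card := by
    have h1 := noColl_card hB i S (by simp [S])
    have h2 := card_filter_add_card_filter_not (s := (univ : Finset (Fin n → Fin B)))
      (fun g => ∃ j ∈ S, g j = g i)
    have h3 : (univ.filter (fun g : Fin n → Fin B => ¬ ∃ j ∈ S, g j = g i)) =
      univ.filter (fun g : Fin n → Fin B => ∀ j ∈ S, g j ≠ g i) := by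
      ext g; simp
    rw [h3] at h2
    have h4 : (G.card : ℝ) + ((univ.filter (fun g : Fin n → Fin B => ∀ j ∈ S, g j ≠ g i)).card : ℝ)
        = (B : ℝ) ^ n := by
      have : Fintype.card (Fin n → Fin B) = B ^ n := by simp
      rw [card_univ, this] at h2
      exact_mod_cast h2
    have h5 : (1 - 1 / (B : ℝ)) ^ S.card ≤ (1 - 1 / (B : ℝ)) ^ (m - 1) :=
      pow_le_pow_of_le_one (by linarith) (by linarith) hS
    have h6 : (B : ℝ) ^ n * (1 - 1 / (B : ℝ)) ^ S.card ≤
        (B : ℝ) ^ n * (1 - 1 / (B : ℝ)) ^ (m - 1) := by gcongr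
    linarith
  have hq : 0 ≤ 1 - (1 - 1 / (B : ℝ)) ^ (m - 1) := by
    have := pow_le_one₀ (n := m - 1) (by linarith : 0 ≤ 1 - 1 / (B : ℝ)) (by linarith)
    linarith
  let A : Finset (Fin k → Fin n → Fin B) := Fintype.piFinset (fun _ => G)
  have hA : ((B : ℝ) ^ n) ^ k * (1 - (1 - 1 / (B : ℝ)) ^ (m - 1)) ^ k ≤ A.card := by
    simp only [A, Fintype.card_piFinset, prod_const, card_univ, Fintype.card_fin]
    push_cast
    rw [← mul_pow]
    exact pow_le_pow_left₀ (by positivity) hG k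
  have : Nonempty (Fin k) := ⟨⟨0, hk⟩⟩
  have hz : ∀ j : Fin n, 0 ≤ zipfGen α j := fun j => by unfold zipfGen; positivity
  have hnn : ∀ h : Fin k → Fin n → Fin B, 0 ≤ cmEst (zipfGen α) h i - zipfGen α i := by
    intro h
    rw [sub_nonneg]
    refine le_ciInf fun ℓ => ?_
    have := single_le_sum (f := fun j => if h ℓ j = h ℓ i then zipfGen α j else 0) (s := univ)
      (fun j _ => by split_ifs; exacts [hz j, le_rfl]) (mem_univ i)
    simpa using this
  have hAlb : ∀ h ∈ A, (m : ℝ) ^ (-α) ≤ cmEst (zipfGen α) h i - zipfGen α i := by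
    intro h hh
    rw [le_sub_iff_add_le]
    refine le_ciInf fun ℓ => ?_
    have h1 := Fintype.mem_piFinset.1 hh ℓ
    simp only [G, mem_filter, mem_univ, true_and] at h1
    obtain ⟨j, hj, hji⟩ := h1
    simp only [S, T, mem_erase, mem_filter, mem_univ, true_and] at hj
    have h2 := sum_le_sum_of_subset_of_nonneg
      (f := fun j => if h ℓ j = h ℓ i then zipfGen α j else 0) (subset_univ {j, i})
      (fun j _ _ => by split_ifs; exacts [hz j, le_rfl])
    rw [sum_pair hj.1] at h2
    simp only [hji, if_true] at h2
    refine le_trans ?_ h2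
    gcongr
    unfold zipfGen
    apply Real.rpow_le_rpow_of_nonpos (by positivity) _ (by linarith)
    exact_mod_cast hj.2
  unfold expUnif
  have hc : (Fintype.card (Fin k → Fin n → Fin B) : ℝ) = ((B : ℝ) ^ n) ^ k := by simp
  rw [hc, le_div_iff₀ (by positivity)]
  calc (m : ℝ) ^ (-α) * (1 - (1 - 1 / (B : ℝ)) ^ (m - 1)) ^ k * ((B : ℝ) ^ n) ^ k
      = (((B : ℝ) ^ n) ^ k * (1 - (1 - 1 / (B : ℝ)) ^ (m - 1)) ^ k) * (m : ℝ) ^ (-α) := by ring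
    _ ≤ A.card * (m : ℝ) ^ (-α) := by gcongr
    _ ≤ ∑ h ∈ A, (cmEst (zipfGen α) h i - zipfGen α i) := by
        rw [← nsmul_eq_mul]
        exact card_nsmul_le_sum _ _ _ hAlb
    _ ≤ _ := sum_le_sum_of_subset_of_nonneg (subset_univ _) (fun h _ _ => hnn h)

lemma exists_m {B k : ℕ} (hk : 2 ≤ k) (hB : 2 ≤ B) :
    ∃ m : ℕ, 1 ≤ m ∧ m ≤ k * B ∧ (m : ℝ) ≤ 3 * ((B : ℝ) * Real.log k) ∧
      1 / 10 ≤ (1 - (1 - 1 / (B : ℝ)) ^ (m - 1)) ^ k := by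
  have hk2 : (2 : ℝ) ≤ k := by exact_mod_cast hk
  have hB2 : (2 : ℝ) ≤ B := by exact_mod_cast hB
  have hB0 : (0 : ℝ) < B := by linarith
  have hk0 : (0 : ℝ) < k := by linarith
  have hl2 := Real.log_two_gt_d9
  have hl2' := Real.log_two_lt_d9
  have hlk : Real.log 2 ≤ Real.log k := Real.log_le_log (by norm_num) hk2
  have hlk2 : 2 * Real.log k ≤ k := by
    have := Real.log_le_sub_one_of_pos (x := (k : ℝ) / 2) (by positivity)
    rw [Real.log_div (by positivity) (by norm_num)] at this
    linarith
  have hBl : 1 ≤ (B : ℝ) * Real.log k := by nlinarith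
  set x : ℝ := 2 * ((B : ℝ) * Real.log k) with hx
  have hceil := Nat.le_ceil x
  have hceil2 := Nat.ceil_lt_add_one (a := x) (by linarith)
  have hm1 : 1 ≤ ⌈x⌉₊ := Nat.one_le_ceil_iff.2 (by linarith)
  refine ⟨⌈x⌉₊, hm1, ?_, by linarith, ?_⟩
  · apply Nat.ceil_le.2
    push_cast
    nlinarith
  have hinv : 1 / (B : ℝ) ≤ 1 / 2 := one_div_le_one_div_of_le (by norm_num) hB2
  have hinv0 : 0 < 1 / (B : ℝ) := by positivity
  set q := (1 - 1 / (B : ℝ)) ^ (⌈x⌉₊ - 1) with hq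
  have hq0 : 0 ≤ q := pow_nonneg (by linarith) _
  have hq1 : q ≤ 1 := pow_le_one₀ (by linarith) (by linarith)
  have hqe : q ≤ Real.exp (1 / 2) / (k : ℝ) ^ 2 := by
    have h1 : 1 - 1 / (B : ℝ) ≤ Real.exp (-(1 / (B : ℝ))) := by
      have := Real.add_one_le_exp (-(1 / (B : ℝ))); linarith
    have h2 : q ≤ Real.exp (-(1 / (B : ℝ))) ^ (⌈x⌉₊ - 1) :=
      pow_le_pow_left₀ (by linarith) h1 _
    rw [← Real.exp_nat_mul, Nat.cast_sub hm1] at h2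
    refine h2.trans ?_
    have h3 : Real.exp (1 / 2) / (k : ℝ) ^ 2 = Real.exp (1 / 2 - 2 * Real.log k) := by
      rw [Real.exp_sub, mul_comm, Real.exp_mul, Real.exp_log hk0]
      norm_num
    rw [h3]
    apply Real.exp_le_exp.2
    have h4 : (x - 1) * (1 / (B : ℝ)) ≤ ((⌈x⌉₊ : ℝ) - 1) * (1 / (B : ℝ)) := by gcongr
    have h5 : x * (1 / (B : ℝ)) = 2 * Real.log k := by rw [hx]; field_simp
    push_cast
    linarith
  have hexp : Real.exp (1 / 2) ≤ 1.8 := by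
    have h1 : Real.exp (1 / 2) ^ 2 = Real.exp 1 := by
      rw [← Real.exp_nat_mul]; norm_num
    have := Real.exp_one_lt_d9
    have := Real.exp_pos (1 / 2)
    nlinarith
  have hkq : (k : ℝ) * q ≤ 0.9 := by
    calc (k : ℝ) * q ≤ k * (1.8 / (k : ℝ) ^ 2) := by
          gcongr
          exact hqe.trans (by gcongr)
      _ = 1.8 / k := by field_simp
      _ ≤ 0.9 := by rw [div_le_iff₀ hk0]; linarith
  have := one_add_mul_le_pow (a := -q) (by linarith) k
  rw [← sub_eq_add_neg] at this
  linarith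

/-- for Zipfian input with exponent `α > 1`, the expected
Count-Min error with `k ≥ 2` hash functions is at least
`c·(B^{-k} + (B·log k)^{-α})`. -/
theorem countMin_genZipf_large_alpha_lower :
    ∀ α : ℝ, 1 < α →
      ∃ c : ℝ, 0 < c ∧
        ∀ n B k : ℕ, 2 ≤ k → 2 ≤ B → k * B ≤ n → ∀ i : Fin n,
          c * ((B : ℝ) ^ (-(k : ℝ)) + ((B : ℝ) * Real.log (k : ℝ)) ^ (-α)) ≤
            expUnif (fun h : Fin k → Fin n → Fin B =>
              cmEst (zipfGen α) h i - zipfGen α i) := by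
  intro α hα
  refine ⟨(3 : ℝ) ^ (-α) / 20, by positivity, ?_⟩
  intro n B k hk hB hn i
  have hB0 : (0 : ℝ) < B := by positivity
  have hl : 0 < Real.log k := Real.log_pos (by exact_mod_cast (by omega : 1 < k))
  have h1 := main_lb (α := α) (k := k) (m := 2) (by linarith) (by omega) hB (by norm_num)
    (by nlinarith) i
  obtain ⟨m, hm1, hmk, hm3, hm4⟩ := exists_m hk hB
  have h2 := main_lb (α := α) (k := k) (m := m) (by linarith) (by omega) hB hm1 (hmk.trans hn) i
  set E := expUnif (fun h : Fin k → Fin n → Fin B => cmEst (zipfGen α) h i - zipfGen α i)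
  have e1 : (3 : ℝ) ^ (-α) * (B : ℝ) ^ (-(k : ℝ)) ≤ E := by
    refine le_trans ?_ h1
    have : (1 - (1 - 1 / (B : ℝ)) ^ (2 - 1)) ^ k = (B : ℝ) ^ (-(k : ℝ)) := by
      rw [Real.rpow_neg hB0.le, Real.rpow_natCast]; simp
    rw [this]
    refine mul_le_mul_of_nonneg_right ?_ (by positivity)
    exact Real.rpow_le_rpow_of_nonpos (by norm_num) (by norm_num) (by linarith)
  have e2 : (3 : ℝ) ^ (-α) * ((B : ℝ) * Real.log (k : ℝ)) ^ (-α) * (1 / 10) ≤ E := by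
    refine le_trans ?_ h2
    rw [← Real.mul_rpow (by norm_num) (by positivity)]
    have hm0 : (0 : ℝ) < m := by exact_mod_cast hm1
    have := Real.rpow_le_rpow_of_nonpos hm0 hm3 (by linarith : -α ≤ 0)
    gcongr
  have p1 : 0 ≤ (3 : ℝ) ^ (-α) * (B : ℝ) ^ (-(k : ℝ)) := by positivity
  linarith
end

section
/- For every fixed α ∈ (0,1) there exist constants c_0 ≥ 1 and c > 0 (depending only on α) such that the following holds. For all n, B ∈ ℕ with n ≥ c_0·B, and for every (deterministic, arbitrary) function h : {1,...,n} → {1,...,B}, defining f̃_i = Σ_{j=1}^n 1[h(j)=h(i)]·(1/j^α) for each i ∈ {1,...,n}, one has Σ_{i=1}^n (1/i^α)·(f̃_i − 1/i^α) ≥ c·n^{2−2α}/B. -/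
lemma pair_count {n B : ℕ} (h : Fin n → Fin B) :
    (n : ℝ) ^ 2 ≤ B * ∑ i : Fin n, ∑ j : Fin n, (if h j = h i then (1 : ℝ) else 0) := by
  have h1 : ∑ b : Fin B, ∑ j : Fin n, (if h j = b then (1 : ℝ) else 0) = n := by
    rw [Finset.sum_comm]; simp
  have h2 : ∑ i : Fin n, ∑ j : Fin n, (if h j = h i then (1 : ℝ) else 0)
      = ∑ b : Fin B, (∑ j : Fin n, (if h j = b then (1 : ℝ) else 0)) ^ 2 := by
    have : ∀ i : Fin n, ∑ j : Fin n, (if h j = h i then (1 : ℝ) else 0)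
        = ∑ b : Fin B, (if h i = b then (1 : ℝ) else 0) *
          ∑ j : Fin n, (if h j = b then (1 : ℝ) else 0) := by
      intro i
      simp only [ite_mul, one_mul, zero_mul]
      rw [Finset.sum_ite_eq]
      simp
    rw [Finset.sum_congr rfl (fun i _ => this i), Finset.sum_comm]
    refine Finset.sum_congr rfl fun b _ => ?_
    rw [← Finset.sum_mul, sq]
  have h3 := sq_sum_le_card_mul_sum_sq (s := (Finset.univ : Finset (Fin B)))
    (f := fun b => ∑ j : Fin n, (if h j = b then (1 : ℝ) else 0))
  rw [h1] at h3
  rw [h2]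
  simpa using h3

/-- deterministic lower bound for `α ∈ (0,1)`: for any assignment
`h` of the `n` items to `B` buckets, the total frequency-weighted error of the
bucket-total estimates is at least `c·n^{2-2α}/B`, provided `n ≥ c₀·B`. -/
theorem countMin_deterministic_lower_small_alpha :
    ∀ α : ℝ, 0 < α → α < 1 →
      ∃ c₀ c : ℝ, 1 ≤ c₀ ∧ 0 < c ∧
        ∀ n B : ℕ, c₀ * (B : ℝ) ≤ (n : ℝ) →
          ∀ h : Fin n → Fin B,
            c * (n : ℝ) ^ (2 - 2 * α) / (B : ℝ) ≤
              ∑ i : Fin n, zipfGen α i *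
                ((∑ j : Fin n, if h j = h i then zipfGen α j else 0) -
                  zipfGen α i) := by
  intro α h0 _
  refine ⟨2, 1 / 2, by norm_num, by norm_num, ?_⟩
  intro n B hn h
  rcases Nat.eq_zero_or_pos n with rfl | hnpos
  · have hB : (B : ℝ) = 0 := by
      have : (0 : ℝ) ≤ B := Nat.cast_nonneg B
      push_cast at hn
      linarith
    simp [hB]
  have hBpos : 0 < B := (h ⟨0, hnpos⟩).pos
  have hnR : (0 : ℝ) < n := by exact_mod_cast hnpos
  have hBR : (0 : ℝ) < B := by exact_mod_cast hBpos
  obtain ⟨m, hm⟩ : ∃ m : ℝ, m = (n : ℝ) ^ (-α) := ⟨_, rfl⟩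
  have hmpos : 0 < m := by rw [hm]; positivity
  have hf : ∀ i : Fin n, m ≤ zipfGen α i := by
    intro i
    rw [hm, zipfGen]
    apply Real.rpow_le_rpow_of_nonpos (by positivity) _ (by linarith)
    exact_mod_cast i.2
  have hpow : (n : ℝ) ^ (2 - 2 * α) = n ^ 2 * m ^ 2 := by
    rw [hm, ← Real.rpow_natCast, ← Real.rpow_natCast, ← Real.rpow_mul hnR.le,
      ← Real.rpow_add hnR]
    congr 1
    push_cast
    ring
  have hterm : ∀ i : Fin n,
      m * (m * (∑ j : Fin n, (if h j = h i then (1 : ℝ) else 0)) - m) ≤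
      zipfGen α i * ((∑ j : Fin n, if h j = h i then zipfGen α j else 0) - zipfGen α i) := by
    intro i
    have a : zipfGen α i - m ≤ ∑ j : Fin n, (if h j = h i then zipfGen α j - m else 0) := by
      have := Finset.single_le_sum (s := (Finset.univ : Finset (Fin n)))
        (f := fun j => if h j = h i then zipfGen α j - m else 0)
        (fun j _ => by
          try dsimp only
          split_ifs
          · linarith [hf j]
          · exact le_rfl) (Finset.mem_univ i)
      simpa using this
    have a2 : ∑ j : Fin n, (if h j = h i then zipfGen α j - m else 0)
        = (∑ j : Fin n, if h j = h i then zipfGen α j else 0)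
          - m * ∑ j : Fin n, (if h j = h i then (1 : ℝ) else 0) := by
      rw [Finset.mul_sum, ← Finset.sum_sub_distrib]
      refine Finset.sum_congr rfl fun j _ => ?_
      split_ifs <;> simp
    have b : (1 : ℝ) ≤ ∑ j : Fin n, (if h j = h i then (1 : ℝ) else 0) := by
      have := Finset.single_le_sum (s := (Finset.univ : Finset (Fin n)))
        (f := fun j => if h j = h i then (1 : ℝ) else 0)
        (fun j _ => by
          try dsimp only
          split_ifs <;> norm_num) (Finset.mem_univ i)
      simpa using this
    apply mul_le_mul (hf i) (by linarith) (by nlinarith) (by linarith [hf i])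
  refine le_trans ?_ (Finset.sum_le_sum fun i _ => hterm i)
  rw [← Finset.mul_sum, Finset.sum_sub_distrib, ← Finset.mul_sum, hpow]
  have hp := pair_count h
  generalize ∑ i : Fin n, ∑ j : Fin n, (if h j = h i then (1 : ℝ) else 0) = S at hp ⊢
  simp only [Finset.sum_const, Finset.card_univ, Fintype.card_fin, nsmul_eq_mul]
  rw [div_le_iff₀ hBR]
  have k : (n : ℝ) ^ 2 / 2 ≤ B * S - B * n := by nlinarith
  have := mul_le_mul_of_nonneg_left k (sq_nonneg m)
  nlinarith
end

section
/- For every fixed α > 1 there exists a constant c > 0 (depending only on α) such that the following holds. For all n, B ∈ ℕ with n ≥ 3B, and for every (deterministic, arbitrary) function h : {1,...,n} → {1,...,B}, defining f̃_i = Σ_{j=1}^n 1[h(j)=h(i)]·(1/j^α) for each i ∈ {1,...,n}, one has Σ_{i=1}^n (1/i^α)·(f̃_i − 1/i^α) ≥ c·B^{1−2α}. -/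
/-- deterministic lower bound for `α > 1`: for any assignment
`h` of the `n` items to `B` buckets, the total frequency-weighted error of the
bucket-total estimates is at least `c·B^{1-2α}`, provided `n ≥ 3B`. -/
theorem countMin_deterministic_lower_large_alpha :
    ∀ α : ℝ, 1 < α →
      ∃ c : ℝ, 0 < c ∧
        ∀ n B : ℕ, 3 * B ≤ n →
          ∀ h : Fin n → Fin B,
            c * (B : ℝ) ^ (1 - 2 * α) ≤
              ∑ i : Fin n, zipfGen α i *
                ((∑ j : Fin n, if h j = h i then zipfGen α j else 0) -
                  zipfGen α i) := by
  classical
  intro α hα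
  refine ⟨2 * (3 : ℝ) ^ (-2 * α), by positivity, ?_⟩
  intro n B hn h
  have hpos : ∀ i : Fin n, 0 < zipfGen α i := fun i => by
    unfold zipfGen; positivity
  -- the error of item `i` is the sum over the other items of its bucket
  have herr : ∀ i : Fin n, (∑ j : Fin n, if h j = h i then zipfGen α j else 0) - zipfGen α i
      = ∑ j ∈ Finset.univ.erase i, if h j = h i then zipfGen α j else 0 := by
    intro i
    rw [← Finset.add_sum_erase Finset.univ _ (Finset.mem_univ i)]
    simp
  have hterm : ∀ i j : Fin n, 0 ≤ (if h j = h i then zipfGen α j else 0) := by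
    intro i j
    split_ifs
    · exact (hpos j).le
    · exact le_rfl
  rcases Nat.eq_zero_or_pos B with hB | hB
  · have h0 : (B : ℝ) ^ (1 - 2 * α) = 0 := by
      rw [hB, Nat.cast_zero]
      exact Real.zero_rpow (by linarith)
    rw [h0, mul_zero]
    refine Finset.sum_nonneg fun i _ => mul_nonneg (hpos i).le ?_
    rw [herr]
    exact Finset.sum_nonneg fun j _ => hterm i j
  have hBr : (0 : ℝ) < B := by exact_mod_cast hB
  set w : ℝ := (3 * (B : ℝ)) ^ (-α) with hw
  have hw0 : 0 < w := by positivity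
  set S : Finset (Fin n) := Finset.univ.filter (fun i => i.val < 3 * B) with hS
  have hScard : S.card = 3 * B := by
    rw [hS, Fin.card_filter_val_lt]
    omega
  have hSw : ∀ i ∈ S, w ≤ zipfGen α i := by
    intro i hi
    have hi' : i.val < 3 * B := by simpa [hS] using hi
    have : (i.val : ℝ) + 1 ≤ 3 * B := by exact_mod_cast hi'
    unfold zipfGen
    exact Real.rpow_le_rpow_of_nonpos (by positivity) this (by linarith)
  set T : Finset (Fin n) := S.filter (fun i => ∃ j ∈ S, j ≠ i ∧ h j = h i) with hT
  have hcard : (S.filter (fun i => ¬ ∃ j ∈ S, j ≠ i ∧ h j = h i)).card ≤ B := by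
    have := Finset.card_le_card_of_injOn
      (s := S.filter (fun i => ¬ ∃ j ∈ S, j ≠ i ∧ h j = h i)) (t := Finset.univ) h
      (fun _ _ => Finset.mem_coe.2 (Finset.mem_univ _)) (by
        intro x hx y hy hxy
        have hx' := Finset.mem_filter.1 (Finset.mem_coe.1 hx)
        have hy' := Finset.mem_filter.1 (Finset.mem_coe.1 hy)
        by_contra hne
        exact hy'.2 ⟨x, hx'.1, hne, hxy⟩)
    simpa using this
  have hTcard : 2 * B ≤ T.card := by
    have : T.card + (S.filter (fun i => ¬ ∃ j ∈ S, j ≠ i ∧ h j = h i)).card = S.card := by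
      rw [hT]
      exact Finset.card_filter_add_card_filter_not _
    omega
  have hTr : 2 * (B : ℝ) ≤ T.card := by exact_mod_cast hTcard
  calc 2 * (3 : ℝ) ^ (-2 * α) * (B : ℝ) ^ (1 - 2 * α) = 2 * B * (w * w) := by
        rw [hw, ← Real.rpow_add (by positivity), Real.mul_rpow (by norm_num) hBr.le,
          show 1 - 2 * α = 1 + (-α + -α) by ring, Real.rpow_add hBr, Real.rpow_one,
          show -2 * α = -α + -α by ring]
        ring
    _ ≤ T.card * (w * w) := by gcongr
    _ = ∑ _i ∈ T, w * w := by simp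
    _ ≤ ∑ i ∈ T, zipfGen α i *
          ((∑ j : Fin n, if h j = h i then zipfGen α j else 0) - zipfGen α i) := by
        refine Finset.sum_le_sum fun i hi => ?_
        obtain ⟨hiS, j, hjS, hji, hh⟩ := Finset.mem_filter.1 hi
        refine mul_le_mul (hSw i hiS) ?_ hw0.le (hpos i).le
        rw [herr]
        refine le_trans ?_ (Finset.single_le_sum (fun k _ => hterm i k)
          (Finset.mem_erase.2 ⟨hji, Finset.mem_univ j⟩))
        rw [if_pos hh]
        exact hSw j hjS
    _ ≤ _ := by
        refine Finset.sum_le_sum_of_subset_of_nonneg (Finset.subset_univ _) fun i _ _ => ?_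
        refine mul_nonneg (hpos i).le ?_
        rw [herr]
        exact Finset.sum_nonneg fun j _ => hterm i j
end

section
/- For every fixed α > 1 and every ε ∈ (0, 1/2] there exists a constant C > 0 (depending only on α and ε) such that the following holds. Let n, B, B_h ∈ ℕ with n ≥ 2B and ε·B ≤ B_h ≤ B/2, and let δ ∈ [0,1]. Let h : {1,...,n} → {1,...,B−B_h} be truly random (values i.i.d. uniform on {1,...,B−B_h}), and let a_1,...,a_n be {0,1}-valued random variables that are mutually independent and independent of h, satisfying Pr[a_j = 1] ≤ δ for every j ∈ {1,...,B_h}. Define f̃_i = 1/i^α if a_i = 0, and f̃_i = Σ_{j=1}^n a_j·1[h(j)=h(i)]·(1/j^α) if a_i = 1. Then (1/N)·Σ_{i=1}^n (1/i^α)·E[|f̃_i − 1/i^α|] ≤ C·(δ + B^{1−α})²/B, where N = Σ_{i=1}^n 1/i^α. -/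
/-- Expectation over mutually independent classification bits `a : Fin n → Bool`
(with `Pr[a_j = 1] = p j`) together with an independent uniformly random hash
function `h : Fin n → Fin m`. -/
noncomputable def noisyExpCM {n m : ℕ} (p : Fin n → ℝ)
    (X : (Fin n → Bool) → (Fin n → Fin m) → ℝ) : ℝ :=
  ∑ a : Fin n → Bool,
    (∏ j : Fin n, if a j then p j else 1 - p j) *
      expUnif (fun h : Fin n → Fin m => X a h)

open Finset in
lemma aux_prod {n : ℕ} (i j : Fin n) (hij : i ≠ j) (u : Fin n → ℝ) (v : ℝ) :
    ∏ k : Fin n, (if k = i ∨ k = j then u k else v) = u i * u j * v ^ (n - 2) := by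
  classical
  rw [Finset.prod_ite]
  have h1 : (Finset.univ.filter (fun k : Fin n => k = i ∨ k = j)) = {i, j} := by
    ext k; simp
  have h2 : (Finset.univ.filter (fun k : Fin n => ¬ (k = i ∨ k = j))) = ({i, j} : Finset (Fin n))ᶜ := by
    ext k; simp
  rw [h1, h2, Finset.prod_pair hij, Finset.prod_const, Finset.card_compl, Finset.card_pair hij,
    Fintype.card_fin]

lemma aux_bits {n : ℕ} (i j : Fin n) (hij : i ≠ j) (p : Fin n → ℝ) :
    ∑ a : Fin n → Bool, (∏ k : Fin n, if a k then p k else 1 - p k) *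
      (if a i = true ∧ a j = true then (1 : ℝ) else 0) = p i * p j := by
  classical
  have h : ∀ a : Fin n → Bool, (∏ k : Fin n, if a k then p k else 1 - p k) *
      (if a i = true ∧ a j = true then (1 : ℝ) else 0) =
      ∏ k : Fin n, ((if a k then p k else 1 - p k) *
        (if k = i ∨ k = j then (if a k then 1 else 0) else 1)) := by
    intro a
    rw [Finset.prod_mul_distrib, aux_prod i j hij (fun k => if a k then 1 else 0) 1]
    congr 1
    by_cases h1 : a i = true <;> by_cases h2 : a j = true <;> simp [h1, h2]
  simp_rw [h]
  rw [← Fintype.prod_sum (fun k (b : Bool) => ((if b then p k else 1 - p k) *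
        (if k = i ∨ k = j then (if b then 1 else 0) else 1)))]
  have h3 : ∀ k : Fin n, ∑ b : Bool, ((if b then p k else 1 - p k) *
        (if k = i ∨ k = j then (if b then (1 : ℝ) else 0) else 1)) =
        if k = i ∨ k = j then p k else 1 := by
    intro k
    by_cases hk : k = i ∨ k = j <;> simp [hk]
  simp_rw [h3]
  rw [aux_prod i j hij]
  simp

lemma aux_hash {n m : ℕ} (hm : 0 < m) (i j : Fin n) (hij : i ≠ j) :
    expUnif (fun h : Fin n → Fin m => if h j = h i then (1 : ℝ) else 0) = 1 / m := by
  classical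
  have hn : 2 ≤ n := by
    have := i.2; have := j.2
    have : (i : ℕ) ≠ j := fun h => hij (Fin.ext h)
    omega
  have h : ∀ h : Fin n → Fin m, (if h j = h i then (1 : ℝ) else 0) =
      ∑ c : Fin m, ∏ k : Fin n, (if k = i ∨ k = j then (if h k = c then 1 else 0) else 1) := by
    intro h
    have : ∀ c : Fin m, ∏ k : Fin n, (if k = i ∨ k = j then (if h k = c then (1 : ℝ) else 0) else 1)
        = if h i = c then (if h j = c then 1 else 0) else 0 := by
      intro c
      rw [aux_prod i j hij (fun k => if h k = c then 1 else 0) 1]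
      by_cases h1 : h i = c <;> by_cases h2 : h j = c <;> simp [h1, h2]
    simp_rw [this]
    simp
  unfold expUnif
  simp_rw [h]
  rw [Finset.sum_comm]
  have h4 : ∀ c : Fin m, ∑ h : Fin n → Fin m,
      ∏ k : Fin n, (if k = i ∨ k = j then (if h k = c then (1 : ℝ) else 0) else 1)
      = (m : ℝ) ^ (n - 2) := by
    intro c
    rw [← Fintype.prod_sum (fun k (x : Fin m) =>
      (if k = i ∨ k = j then (if x = c then (1 : ℝ) else 0) else 1))]
    have : ∀ k : Fin n, ∑ x : Fin m, (if k = i ∨ k = j then (if x = c then (1 : ℝ) else 0) else 1)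
        = if k = i ∨ k = j then 1 else (m : ℝ) := by
      intro k
      by_cases hk : k = i ∨ k = j <;> simp [hk]
    simp_rw [this]
    rw [aux_prod i j hij (fun _ => 1)]
    simp
  simp_rw [h4]
  have hm' : (m : ℝ) ≠ 0 := by positivity
  obtain ⟨q, rfl⟩ := Nat.exists_eq_add_of_le hn
  simp only [Finset.sum_const, Finset.card_univ, Fintype.card_fin, nsmul_eq_mul, Fintype.card_fun,
    Nat.cast_pow, Nat.add_sub_cancel_left]
  field_simp
  ring

lemma aux_exp {n m : ℕ} (hm : 0 < m) (p : Fin n → ℝ) (f : Fin n → ℝ) (hf : ∀ i, 0 ≤ f i)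
    (i : Fin n) :
    noisyExpCM (m := m) p (fun a h =>
      |(if a i then ∑ j : Fin n, if a j = true ∧ h j = h i then f j else 0
        else f i) - f i|) = ∑ j ∈ Finset.univ.erase i, f j * (p i * p j * (1 / m)) := by
  classical
  have hpt : ∀ (a : Fin n → Bool) (h : Fin n → Fin m),
      |(if a i then ∑ j : Fin n, if a j = true ∧ h j = h i then f j else 0
        else f i) - f i| = ∑ j ∈ Finset.univ.erase i,
          f j * (if a i = true ∧ a j = true then (1 : ℝ) else 0) *
            (if h j = h i then (1 : ℝ) else 0) := by
    intro a h
    by_cases ha : a i = true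
    · rw [if_pos ha, ← Finset.add_sum_erase _ _ (Finset.mem_univ i)]
      rw [if_pos ⟨ha, rfl⟩, add_sub_cancel_left, abs_of_nonneg]
      · refine Finset.sum_congr rfl fun j _ => ?_
        by_cases h1 : a j = true <;> by_cases h2 : h j = h i <;> simp [ha, h1, h2]
      · refine Finset.sum_nonneg fun j _ => ?_
        split_ifs
        · exact hf j
        · exact le_rfl
    · simp [ha]
  unfold noisyExpCM
  simp_rw [hpt]
  have hE : ∀ a : Fin n → Bool, expUnif (fun h : Fin n → Fin m => ∑ j ∈ Finset.univ.erase i,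
          f j * (if a i = true ∧ a j = true then (1 : ℝ) else 0) *
            (if h j = h i then (1 : ℝ) else 0)) = ∑ j ∈ Finset.univ.erase i,
          f j * (if a i = true ∧ a j = true then (1 : ℝ) else 0) * (1 / m) := by
    intro a
    have : ∀ j ∈ Finset.univ.erase i,
        f j * (if a i = true ∧ a j = true then (1 : ℝ) else 0) * (1 / m) =
        f j * (if a i = true ∧ a j = true then (1 : ℝ) else 0) *
        expUnif (fun h : Fin n → Fin m => if h j = h i then (1 : ℝ) else 0) := by
      intro j hj
      rw [aux_hash hm i j (Finset.ne_of_mem_erase hj).symm]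
    rw [Finset.sum_congr rfl this]
    unfold expUnif
    rw [Finset.sum_comm, Finset.sum_div]
    refine Finset.sum_congr rfl fun j _ => ?_
    rw [← Finset.mul_sum, mul_div_assoc]
  simp_rw [hE, Finset.mul_sum]
  rw [Finset.sum_comm]
  refine Finset.sum_congr rfl fun j hj => ?_
  rw [← aux_bits i j (Finset.ne_of_mem_erase hj).symm p, Finset.sum_mul, Finset.mul_sum]
  refine Finset.sum_congr rfl fun a _ => ?_
  ring

lemma aux_step (α : ℝ) (hα : 1 < α) (k : ℕ) (hk : 1 ≤ k) :
    (α - 1) * ((k : ℝ) + 1) ^ (-α) ≤ (k : ℝ) ^ (1 - α) - ((k : ℝ) + 1) ^ (1 - α) := by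
  have hk0 : (0 : ℝ) < k := by exact_mod_cast hk
  have hk1 : (0 : ℝ) < (k : ℝ) + 1 := by linarith
  have e1 : (k : ℝ) ^ (1 - α) = ((k : ℝ) + 1) ^ (1 - α) * ((k : ℝ) / (k + 1)) ^ (1 - α) := by
    rw [← Real.mul_rpow hk1.le (by positivity)]
    congr 1
    field_simp
  have e2 : ((k : ℝ) + 1) ^ (-α) = ((k : ℝ) + 1) ^ (1 - α) * (1 / (k + 1)) := by
    rw [show -α = (1 - α) - 1 by ring, Real.rpow_sub_one hk1.ne']
    ring
  have e3 : 1 + (α - 1) * (1 / ((k : ℝ) + 1)) ≤ ((k : ℝ) / (k + 1)) ^ (1 - α) := by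
    rw [Real.rpow_def_of_pos (by positivity)]
    have h1 := Real.add_one_le_exp (Real.log ((k : ℝ) / (k + 1)) * (1 - α))
    have h2 := Real.log_le_sub_one_of_pos (show (0 : ℝ) < (k : ℝ) / (k + 1) by positivity)
    have h3 : (k : ℝ) / (k + 1) - 1 = -(1 / ((k : ℝ) + 1)) := by field_simp; ring
    rw [h3] at h2
    nlinarith
  have hpos : 0 < ((k : ℝ) + 1) ^ (1 - α) := Real.rpow_pos_of_pos hk1 _
  rw [e1, e2]
  nlinarith [mul_le_mul_of_nonneg_left e3 hpos.le]

lemma aux_tail (α : ℝ) (hα : 1 < α) (b : ℕ) (hb : 1 ≤ b) (n : ℕ) (hn : b ≤ n) :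
    (α - 1) * ∑ k ∈ Finset.range n, (if b ≤ k then ((k : ℝ) + 1) ^ (-α) else 0) ≤
      (b : ℝ) ^ (1 - α) - (n : ℝ) ^ (1 - α) := by
  induction n, hn using Nat.le_induction with
  | base =>
    rw [Finset.sum_eq_zero]
    · simp
    · intro k hk
      rw [Finset.mem_range] at hk
      rw [if_neg (by omega)]
  | succ n hn ih =>
    rw [Finset.sum_range_succ, if_pos hn, mul_add]
    have := aux_step α hα n (hb.trans hn)
    push_cast
    linarith

lemma aux_tail' (α : ℝ) (hα : 1 < α) (b : ℕ) (hb : 1 ≤ b) (n : ℕ) (hn : b ≤ n) :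
    ∑ k : Fin n, (if b ≤ (k : ℕ) then zipfGen α k else 0) ≤ (b : ℝ) ^ (1 - α) / (α - 1) := by
  rw [le_div_iff₀ (by linarith)]
  have h := aux_tail α hα b hb n hn
  rw [Finset.sum_range] at h
  have : 0 ≤ (n : ℝ) ^ (1 - α) := by positivity
  unfold zipfGen
  linarith

/-- learned Count-Min on Zipfian input with exponent `α > 1`,
using a noisy heavy hitter oracle that misclassifies each of the `Bh` heavy items
with probability at most `δ`, incurs expected (query-weighted) error
`O((δ + B^{1-α})²/B)`. -/
theorem learned_countMin_noisy_oracle :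
    ∀ α : ℝ, 1 < α →
      ∀ ε : ℝ, 0 < ε → ε ≤ 1 / 2 →
        ∃ C : ℝ, 0 < C ∧
          ∀ n B Bh : ℕ, 2 * B ≤ n → ε * (B : ℝ) ≤ (Bh : ℝ) → 2 * Bh ≤ B →
            ∀ δ : ℝ, 0 ≤ δ → δ ≤ 1 →
              ∀ p : Fin n → ℝ, (∀ j, 0 ≤ p j) → (∀ j, p j ≤ 1) →
                (∀ j : Fin n, (j : ℕ) < Bh → p j ≤ δ) →
                (1 / ∑ i : Fin n, zipfGen α i) *
                    (∑ i : Fin n, zipfGen α i *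
                      noisyExpCM (m := B - Bh) p (fun a h =>
                        |(if a i then
                            ∑ j : Fin n,
                              if a j = true ∧ h j = h i then zipfGen α j else 0
                          else zipfGen α i) - zipfGen α i|)) ≤
                  C * (δ + (B : ℝ) ^ (1 - α)) ^ 2 / (B : ℝ) := by
  intro α hα ε hε hε2
  have hα1 : 0 < α - 1 := by linarith
  set K : ℝ := 1 + 1 / (α - 1) + ε ^ (1 - α) / (α - 1) with hK
  have hεp : 0 < ε ^ (1 - α) := Real.rpow_pos_of_pos hε _
  have hKpos : 0 < K := by positivity
  refine ⟨2 * K ^ 2, by positivity, ?_⟩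
  intro n B Bh hn hBh hBh2 δ hδ hδ1 p hp hp1 hpδ
  have hf : ∀ i : Fin n, 0 ≤ zipfGen α i := fun i => by unfold zipfGen; positivity
  rcases Nat.eq_zero_or_pos B with rfl | hB
  · have : Bh = 0 := by omega
    subst this
    rcases Nat.eq_zero_or_pos n with rfl | hn0
    · simp
    · haveI : Nonempty (Fin n) := ⟨⟨0, hn0⟩⟩
      haveI : IsEmpty (Fin (0 - 0)) := by simpa using Fin.isEmpty
      simp [noisyExpCM, expUnif]
  have hBr : (0 : ℝ) < B := by exact_mod_cast hB
  have hBhr : (0 : ℝ) < Bh := lt_of_lt_of_le (by positivity) hBh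
  have hBh1 : 1 ≤ Bh := by exact_mod_cast hBhr
  have hm : 0 < B - Bh := by omega
  simp_rw [fun i => aux_exp hm p (zipfGen α) hf i]
  set S : ℝ := ∑ i : Fin n, zipfGen α i * p i with hS
  have hS0 : 0 ≤ S := Finset.sum_nonneg fun i _ => mul_nonneg (hf i) (hp i)
  have hmr : (B : ℝ) / 2 ≤ ((B - Bh : ℕ) : ℝ) := by
    have : B ≤ 2 * (B - Bh) := by omega
    have : (B : ℝ) ≤ 2 * ((B - Bh : ℕ) : ℝ) := by exact_mod_cast this
    linarith
  have hm0 : (0 : ℝ) < ((B - Bh : ℕ) : ℝ) := by exact_mod_cast hm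
  have hN1 : 1 ≤ ∑ i : Fin n, zipfGen α i := by
    have h0 : 0 < n := by omega
    have := Finset.single_le_sum (fun i _ => hf i) (Finset.mem_univ (⟨0, h0⟩ : Fin n))
    refine le_trans ?_ this
    simp [zipfGen]
  have hNup : ∑ i : Fin n, zipfGen α i ≤ 1 + 1 / (α - 1) := by
    have h0 : 0 < n := by omega
    have h1 := aux_tail' α hα 1 le_rfl n h0
    have h2 : ∀ i : Fin n, zipfGen α i = (if i = (⟨0, h0⟩ : Fin n) then 1 else 0) +
        (if 1 ≤ (i : ℕ) then zipfGen α i else 0) := by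
      intro i
      by_cases hi : i = (⟨0, h0⟩ : Fin n)
      · subst hi; simp [zipfGen]
      · have : 1 ≤ (i : ℕ) := by
          by_contra hc
          exact hi (Fin.ext (by simp; omega))
        simp [hi, this]
    rw [Finset.sum_congr rfl fun i _ => h2 i, Finset.sum_add_distrib]
    simp only [Finset.sum_ite_eq', Finset.mem_univ, if_true]
    simpa using h1
  have hSK : S ≤ K * (δ + (B : ℝ) ^ (1 - α)) := by
    have h1 : S ≤ δ * (∑ i : Fin n, zipfGen α i) +
        ∑ i : Fin n, (if Bh ≤ (i : ℕ) then zipfGen α i else 0) := by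
      rw [hS, Finset.mul_sum, ← Finset.sum_add_distrib]
      refine Finset.sum_le_sum fun i _ => ?_
      by_cases hi : Bh ≤ (i : ℕ)
      · rw [if_pos hi]
        nlinarith [hf i, hp1 i, mul_nonneg hδ (hf i), mul_le_mul_of_nonneg_left (hp1 i) (hf i)]
      · rw [if_neg hi]
        nlinarith [mul_le_mul_of_nonneg_left (hpδ i (by omega)) (hf i)]
    have h2 := aux_tail' α hα Bh hBh1 n (by omega)
    have h3 : (Bh : ℝ) ^ (1 - α) ≤ ε ^ (1 - α) * (B : ℝ) ^ (1 - α) := by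
      rw [← Real.mul_rpow hε.le hBr.le]
      exact Real.rpow_le_rpow_of_nonpos (by positivity) hBh (by linarith)
    have h4 : (Bh : ℝ) ^ (1 - α) / (α - 1) ≤ ε ^ (1 - α) / (α - 1) * (B : ℝ) ^ (1 - α) := by
      rw [div_mul_eq_mul_div]
      exact div_le_div_of_nonneg_right h3 hα1.le
    have h5 := mul_le_mul_of_nonneg_left hNup hδ
    have h6 : 0 ≤ δ * (ε ^ (1 - α) / (α - 1)) := by positivity
    have h7 : 0 ≤ (1 + 1 / (α - 1)) * (B : ℝ) ^ (1 - α) := by positivity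
    rw [hK]
    linarith
  have hT : ∑ i : Fin n, zipfGen α i * ∑ j ∈ Finset.univ.erase i,
      zipfGen α j * (p i * p j * (1 / ((B - Bh : ℕ) : ℝ))) ≤ S ^ 2 * (2 / B) := by
    have hinv : 1 / ((B - Bh : ℕ) : ℝ) ≤ 2 / B := by
      rw [div_le_div_iff₀ hm0 hBr]; linarith
    calc _ ≤ ∑ i : Fin n, zipfGen α i * ∑ j : Fin n,
          zipfGen α j * (p i * p j * (1 / ((B - Bh : ℕ) : ℝ))) := by
          refine Finset.sum_le_sum fun i _ => mul_le_mul_of_nonneg_left ?_ (hf i)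
          refine Finset.sum_le_sum_of_subset_of_nonneg (Finset.erase_subset _ _) fun j _ _ => ?_
          exact mul_nonneg (hf j) (mul_nonneg (mul_nonneg (hp i) (hp j)) (by positivity))
      _ = S ^ 2 * (1 / ((B - Bh : ℕ) : ℝ)) := by
          rw [sq, hS, Finset.sum_mul_sum, Finset.sum_mul]
          refine Finset.sum_congr rfl fun i _ => ?_
          rw [Finset.mul_sum, Finset.sum_mul]
          refine Finset.sum_congr rfl fun j _ => ?_
          ring
      _ ≤ _ := mul_le_mul_of_nonneg_left hinv (by positivity)
  have hSq : S ^ 2 ≤ (K * (δ + (B : ℝ) ^ (1 - α))) ^ 2 := pow_le_pow_left₀ hS0 hSK 2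
  have hN2 : 1 / ∑ i : Fin n, zipfGen α i ≤ 1 := by
    rw [div_le_one (by linarith)]; exact hN1
  calc _ ≤ (1 / ∑ i : Fin n, zipfGen α i) * (S ^ 2 * (2 / B)) :=
        mul_le_mul_of_nonneg_left hT (by positivity)
    _ ≤ 1 * (S ^ 2 * (2 / B)) := mul_le_mul_of_nonneg_right hN2 (by positivity)
    _ ≤ 1 * ((K * (δ + (B : ℝ) ^ (1 - α))) ^ 2 * (2 / B)) := by gcongr
    _ = _ := by ring
end
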